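/- arXiv:0903.3151 — 3 statements merged into one kernel-verified Lean document; each statement's English description precedes it below -/
import Mathlib

section
/- For every integer r ≥ 4, every finite simple graph G that contains no clique on r−1 vertices and satisfies χ(G) ≥ r+1 has at least r+7 vertices; equivalently, the vertex Folkman number F_v(2_r; r−1) ≥ r+7. -/
open SimpleGraph

/-- The vertex Folkman number `F_v(2_r; q)`: the minimum number of vertices of a
`K_q`-free finite simple graph with chromatic number at least `r + 1`. -/
noncomputable def folkman (r q : ℕ) : ℕ :=
  sInf {n : ℕ | ∃ G : SimpleGraph (Fin n),
    G.CliqueFree q ∧ (r + 1 : ℕ∞) ≤ G.chromaticNumber}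

/-!
Let `G` have no proper `r`-coloring and at most `r + 2 * e` vertices, `e ≤ 4`; then `G` has a
clique on `r + 2 - e` vertices. Removing an independent triple lowers `r` and `e` by one, so one may
assume that `G` has no such triple, i.e. that `Gᶜ` is triangle-free. Matchings of `Gᶜ` give
colorings of `G` whose classes have at most two vertices, hence Tutte's theorem, applied after
padding `G` with isolated vertices to order `2 * r`, yields a set `S` for which `Gᶜ - S` has many
odd components. These are then small: if `2 * m` vertices remain after taking one from each odd
component, then `m < 2 * e`. The bound `R(3, t) ≤ t (t + 1) / 2`, applied to each component of
`Gᶜ - S`, produces the required independent set of `Gᶜ`.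

The minimum defining `folkman` is not the junk value `sInf ∅ = 0`, because shift graphs are
triangle-free with unbounded chromatic number.
-/

section

universe u

variable {V : Type u} {W : Type*} {G : SimpleGraph V} {H : SimpleGraph W} {r e t q m : ℕ}

lemma not_colorable_iff_lt_chromaticNumber :
    ¬ G.Colorable r ↔ (r + 1 : ℕ∞) ≤ G.chromaticNumber := by
  rw [← chromaticNumber_le_iff_colorable, not_le, ENat.add_one_le_iff (ENat.natCast_ne_top r)]

lemma colorable_succ_of_colorable_induce_compl {s : Set V} (hs : G.IsIndepSet s)
    (hG : (G.induce sᶜ).Colorable r) : G.Colorable (r + 1) := by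
  classical
  obtain ⟨C⟩ := hG
  let color (v : V) : Option (Fin r) := if hv : v ∈ s then none else some (C ⟨v, hv⟩)
  suffices valid : ∀ {v w}, G.Adj v w → color v ≠ color w by
    simpa using (Coloring.mk color valid).colorable
  intro v w hvw
  by_cases hv : v ∈ s <;> by_cases hw : w ∈ s
  · exact absurd hvw (hs hv hw hvw.ne)
  · simp [color, hv, hw]
  · simp [color, hv, hw]
  · have hC : C ⟨v, hv⟩ ≠ C ⟨w, hw⟩ := C.valid (by simpa using hvw)
    simpa [color, hv, hw] using hC

lemma ncard_oddComponents_congr (φ : G ≃g H) :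
    G.oddComponents.ncard = H.oddComponents.ncard := by
  refine Set.ncard_congr' (φ.connectedComponentEquiv.subtypeEquiv fun c => ?_)
  rw [Set.mem_ofPred_eq, Set.mem_ofPred_eq, Set.ncard_congr' (c.isoEquivSupp φ)]

lemma isTutteViolator_iff_ncard_lt_induce {u : Set V} :
    G.IsTutteViolator u ↔ u.ncard < (G.induce uᶜ).oddComponents.ncard := by
  rw [IsTutteViolator, induce_eq_coe_induce_top, Set.compl_eq_univ_sdiff]
  rfl

lemma universalVerts_subset_of_isTutteViolator [Finite V] (hV : Even (Nat.card V)) {u : Set V}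
    (hu : G.IsTutteViolator u) : G.universalVerts ⊆ u := by
  intro w hw
  by_contra hwu
  rw [isTutteViolator_iff_ncard_lt_induce] at hu
  have hconn : (G.induce uᶜ).Preconnected := by
    have hreach (v : ↥uᶜ) : (G.induce uᶜ).Reachable ⟨w, hwu⟩ v := by
      by_cases hv : w = v
      · simp [hv]
      · exact Adj.reachable (G := G.induce uᶜ) (hw hv)
    exact fun a b => (hreach a).symm.trans (hreach b)
  have := hconn.subsingleton_connectedComponent
  have hle := Set.ncard_le_one_of_subsingleton (G.induce uᶜ).oddComponents
  have hpar := (G.induce uᶜ).odd_ncard_oddComponents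
  have hcompl := Set.ncard_add_ncard_compl u
  rw [Nat.card_coe_set_eq] at hpar
  grind

lemma colorable_of_isPerfectMatching_compl [Finite V] {M : Gᶜ.Subgraph}
    (hM : M.IsPerfectMatching) : G.Colorable (Nat.card V / 2) := by
  classical
  have := Fintype.ofFinite V
  have hcard : Fintype.card M.edgeSet = Nat.card V / 2 := by
    have hdeg (v : V) : M.spanningCoe.degree v = 1 :=
      degree_eq_one_iff_existsUnique_adj.mpr (Subgraph.isPerfectMatching_iff.mp hM v)
    have hsum := M.spanningCoe.sum_degrees_eq_twice_card_edges
    simp only [hdeg, Finset.sum_const, Finset.card_univ, smul_eq_mul, mul_one,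
      edgeFinset_card, Subgraph.edgeSet_spanningCoe] at hsum
    rw [Nat.card_eq_fintype_card, hsum]
    omega
  rw [← hcard]
  refine (Coloring.mk (fun v => hM.1.toEdge ⟨v, hM.2 v⟩) ?_).colorable
  intro v w hvw heq
  have hv := hM.1.mem_coe_toEdge (hM.2 v)
  have hw := hM.1.mem_coe_toEdge (hM.2 w)
  rw [← heq] at hw
  have hMvw : s(v, w) ∈ M.edgeSet := by
    rw [← (Sym2.mem_and_mem_iff hvw.ne).mp ⟨hv, hw⟩]
    exact Subtype.coe_prop _
  exact (M.adj_sub hMvw).2 hvw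

lemma nonempty_induce_compl_preimage_iso (f : G ↪g H) {u : Set W} (hu : (Set.range f)ᶜ ⊆ u) :
    Nonempty (G.induce (f ⁻¹' u)ᶜ ≃g H.induce uᶜ) := by
  let g : ↥(f ⁻¹' u)ᶜ → ↥uᶜ := fun v => ⟨f v, v.2⟩
  have hg : Function.Bijective g := by
    refine ⟨fun v w hvw => Subtype.ext (f.injective (congrArg Subtype.val hvw)), ?_⟩
    rintro ⟨w, hw⟩
    obtain ⟨v, rfl⟩ := Set.compl_subset_comm.mp hu hw
    exact ⟨⟨v, hw⟩, rfl⟩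
  exact ⟨⟨Equiv.ofBijective g hg, f.map_rel_iff⟩⟩

theorem exists_lt_ncard_oddComponents_of_not_colorable [Finite V] (hG : ¬ G.Colorable r) :
    ∃ S : Set V, 2 * r + S.ncard < Nat.card V + (Gᶜ.induce Sᶜ).oddComponents.ncard := by
  obtain hV | hV := lt_or_ge (2 * r) (Nat.card V)
  · exact ⟨∅, by rw [Set.ncard_empty]; omega⟩
  obtain ⟨d, hd⟩ := Nat.exists_eq_add_of_le hV
  let I : SimpleGraph (Fin d) := ⊥
  have hcard : Nat.card (V ⊕ Fin d) = 2 * r := by simp [hd]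
  have heven : Even (Nat.card (V ⊕ Fin d)) := by simp [hcard]
  have hmatch (M : (G ⊕g I)ᶜ.Subgraph) : ¬ M.IsPerfectMatching := fun hM => hG <| by
    have hcol := colorable_of_isPerfectMatching_compl hM
    rw [hcard, Nat.mul_div_cancel_left r two_pos] at hcol
    exact hcol.of_sum_left
  obtain ⟨u, hu⟩ := exists_isTutteViolator hmatch heven
  -- The vertices isolated in `G ⊕g I` are universal in its complement.
  have huniv : Set.range Sum.inr ⊆ u := by
    refine subset_trans ?_ (universalVerts_subset_of_isTutteViolator heven hu)
    rintro _ ⟨i, rfl⟩ (v | j) hne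
    · simp
    · simpa [I] using hne
  let f : Gᶜ ↪g (G ⊕g I)ᶜ := Embedding.complEquiv Embedding.sumInl
  obtain ⟨φ⟩ := nonempty_induce_compl_preimage_iso f (u := u)
    (Set.isCompl_range_inl_range_inr.compl_eq.trans_subset huniv)
  refine ⟨f ⁻¹' u, ?_⟩
  have hcompl : (f ⁻¹' u)ᶜ.ncard = uᶜ.ncard := Set.ncard_congr' φ.toEquiv
  have hodd := ncard_oddComponents_congr φ
  have hu_lt := isTutteViolator_iff_ncard_lt_induce.mp hu
  have hu_card := Set.ncard_add_ncard_compl u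
  have hfu_card := Set.ncard_add_ncard_compl (f ⁻¹' u)
  omega

lemma exists_subset_isNIndepSet_indepNum_induce (S : Set V) :
    ∃ I : Finset V, ↑I ⊆ S ∧ G.IsNIndepSet (G.induce S).indepNum I := by
  obtain ⟨I, hI⟩ := (G.induce S).exists_isNIndepSet_indepNum
  refine ⟨I.map (.subtype _), by simp, ⟨?_, by rw [Finset.card_map, hI.card_eq]⟩⟩
  rw [Finset.coe_map]
  exact (Function.Embedding.subtype _).injective.injOn.pairwise_image.mpr hI.isIndepSet

lemma indepNum_induce_le [Finite V] (S : Set V) : (G.induce S).indepNum ≤ G.indepNum := by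
  obtain ⟨I, -, hI⟩ := exists_subset_isNIndepSet_indepNum_induce (G := G) S
  exact hI.card_eq ▸ hI.isIndepSet.card_le_indepNum

lemma indepNum_induce_nonneighbors_lt [Finite V] (v : V) :
    (G.induce (insert v (G.neighborSet v))ᶜ).indepNum < G.indepNum := by
  classical
  obtain ⟨I, hIv, hI⟩ :=
    exists_subset_isNIndepSet_indepNum_induce (G := G) (insert v (G.neighborSet v))ᶜ
  have hnonadj (w : V) (hw : w ∈ I) : w ≠ v ∧ ¬ G.Adj v w := by
    simpa using hIv hw
  have hv : v ∉ I := fun hv => (hnonadj v hv).1 rfl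
  have hind : G.IsIndepSet ↑(insert v I) := by
    rw [Finset.coe_insert, ← isClique_compl, isClique_insert]
    exact ⟨(isClique_compl G).mpr hI.isIndepSet,
      fun w hw hvw => ⟨hvw, (hnonadj w hw).2⟩⟩
  have hle := hind.card_le_indepNum
  rw [Finset.card_insert_of_notMem hv, hI.card_eq] at hle
  exact hle

theorem sum_indepNum_induce_supp_le [Finite V] [Fintype G.ConnectedComponent] :
    ∑ c : G.ConnectedComponent, (G.induce c.supp).indepNum ≤ G.indepNum := by
  classical
  choose I hIc hI using fun c : G.ConnectedComponent =>
    exists_subset_isNIndepSet_indepNum_induce (G := G) c.supp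
  have hdisj : Set.PairwiseDisjoint (Finset.univ : Finset G.ConnectedComponent) I :=
    fun c _ c' _ hcc' => Finset.disjoint_coe.mp <|
      (G.pairwise_disjoint_supp_connectedComponent hcc').mono (hIc c) (hIc c')
  have hind : G.IsIndepSet ↑(Finset.univ.biUnion I) := by
    simp only [Finset.coe_biUnion, Finset.coe_univ, Set.mem_univ, Set.iUnion_true]
    intro v hv w hw hne hvw
    obtain ⟨c, hvc⟩ := Set.mem_iUnion.mp hv
    obtain ⟨c', hwc'⟩ := Set.mem_iUnion.mp hw
    obtain rfl : c = c' := by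
      rw [← hIc c hvc, ← hIc c' hwc', ConnectedComponent.eq]
      exact hvw.reachable
    exact (hI c).isIndepSet hvc hwc' hne hvw
  calc ∑ c : G.ConnectedComponent, (G.induce c.supp).indepNum
      = (Finset.univ.biUnion I).card := by
        rw [Finset.card_biUnion hdisj]
        exact Finset.sum_congr rfl fun c _ => (hI c).card_eq.symm
    _ ≤ G.indepNum := hind.card_le_indepNum

theorem le_indepNum_of_cliqueFree_three [Finite V] (hG : G.CliqueFree 3)
    (ht : t * (t + 1) ≤ 2 * Nat.card V) : t ≤ G.indepNum := by
  induction t generalizing V with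
  | zero => exact Nat.zero_le _
  | succ t ih =>
    classical
    have := Fintype.ofFinite V
    obtain ⟨v⟩ : Nonempty V := Finite.card_pos_iff.mp (by nlinarith)
    obtain hdeg | hdeg := le_or_gt (t + 1) (G.degree v)
    · have hind : G.IsIndepSet ↑(G.neighborFinset v) := by
        simpa using isIndepSet_neighborSet_of_triangleFree G hG v
      exact hdeg.trans hind.card_le_indepNum
    · have hcard := Set.ncard_add_ncard_compl (insert v (G.neighborSet v))
      rw [Set.ncard_insert_of_notMem G.notMem_neighborSet_self,
        Set.ncard_eq_toFinset_card', ← neighborFinset_def, card_neighborFinset_eq_degree] at hcard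
      have hrec := ih (G := G.induce (insert v (G.neighborSet v))ᶜ)
        (hG.comap (Embedding.induce _).isContained) (by rw [Nat.card_coe_set_eq]; nlinarith)
      exact hrec.trans_lt (indepNum_induce_nonneighbors_lt v)

lemma sum_ncard_supp [Finite V] [Fintype G.ConnectedComponent] :
    ∑ c : G.ConnectedComponent, c.supp.ncard = Nat.card V := by
  rw [← finsum_eq_sum_of_fintype, ← Set.ncard_iUnion_of_finite
    (fun c : G.ConnectedComponent => c.supp.toFinite) G.pairwise_disjoint_supp_connectedComponent,
    iUnion_connectedComponentSupp, Set.ncard_univ]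

lemma ncard_oddComponents_add_two_mul_sum [Finite V] [Fintype G.ConnectedComponent] :
    G.oddComponents.ncard + 2 * ∑ c : G.ConnectedComponent, c.supp.ncard / 2 = Nat.card V := by
  have hodd : G.oddComponents.ncard = ∑ c : G.ConnectedComponent, c.supp.ncard % 2 := by
    rw [Set.ncard_eq_toFinset_card', Set.toFinset_ofPred, Finset.card_filter]
    refine Finset.sum_congr rfl fun c _ => ?_
    grind
  rw [hodd, Finset.mul_sum, ← Finset.sum_add_distrib, ← sum_ncard_supp (G := G)]
  exact Finset.sum_congr rfl fun c _ => Nat.mod_add_div _ 2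

-- `19` is the first order at which the bound `t (t + 1) / 2` on Ramsey numbers is too weak.
lemma card_le_indepNum_add_of_card_lt [Finite V] (hG : G.CliqueFree 3) (hV : Nat.card V < 19) :
    Nat.card V ≤ G.indepNum + Nat.card V / 2 + Nat.card V / 2 / 2 := by
  have hα := le_indepNum_of_cliqueFree_three
    (t := Nat.card V - Nat.card V / 2 - Nat.card V / 2 / 2) hG (by
      generalize Nat.card V = n at hV
      interval_cases n <;> simp)
  omega

theorem card_le_indepNum_add_of_ncard_oddComponents_add [Finite V] (hG : G.CliqueFree 3)
    (hV : G.oddComponents.ncard + 2 * m = Nat.card V) (hM : m < 9) :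
    Nat.card V ≤ G.indepNum + m + m / 2 := by
  have := Fintype.ofFinite G.ConnectedComponent
  have hsum := ncard_oddComponents_add_two_mul_sum (G := G)
  obtain rfl : m = ∑ c : G.ConnectedComponent, c.supp.ncard / 2 := by omega
  have hcomp (c : G.ConnectedComponent) : c.supp.ncard ≤
      (G.induce c.supp).indepNum + c.supp.ncard / 2 + c.supp.ncard / 2 / 2 := by
    have hc : c.supp.ncard / 2 ≤ ∑ c : G.ConnectedComponent, c.supp.ncard / 2 :=
      Finset.single_le_sum_of_canonicallyOrdered
        (f := fun c : G.ConnectedComponent => c.supp.ncard / 2) (Finset.mem_univ c)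
    rw [← Nat.card_coe_set_eq]
    refine card_le_indepNum_add_of_card_lt (hG.comap (Embedding.induce _).isContained) ?_
    rw [Nat.card_coe_set_eq]
    omega
  calc Nat.card V = ∑ c : G.ConnectedComponent, c.supp.ncard := sum_ncard_supp.symm
    _ ≤ ∑ c : G.ConnectedComponent, ((G.induce c.supp).indepNum + c.supp.ncard / 2 +
          c.supp.ncard / 2 / 2) := Finset.sum_le_sum fun c _ => hcomp c
    _ = ∑ c : G.ConnectedComponent, (G.induce c.supp).indepNum +
          ∑ c : G.ConnectedComponent, c.supp.ncard / 2 +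
          ∑ c : G.ConnectedComponent, c.supp.ncard / 2 / 2 := by
        rw [Finset.sum_add_distrib, Finset.sum_add_distrib]
    _ ≤ _ := by
        gcongr
        · exact sum_indepNum_induce_supp_le
        · rw [Nat.le_div_iff_mul_le two_pos, Finset.sum_mul]
          exact Finset.sum_le_sum fun c _ => Nat.div_mul_le_self _ 2

theorem add_two_le_cliqueNum_add_of_cliqueFree_three_compl [Finite V] (he : e ≤ 4)
    (hα : Gᶜ.CliqueFree 3) (hG : ¬ G.Colorable r) (hV : Nat.card V ≤ r + 2 * e) :
    r + 2 ≤ G.cliqueNum + e := by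
  obtain ⟨S, hS⟩ := exists_lt_ncard_oddComponents_of_not_colorable hG
  have := Fintype.ofFinite (Gᶜ.induce Sᶜ).ConnectedComponent
  have hodd := ncard_oddComponents_add_two_mul_sum (G := Gᶜ.induce Sᶜ)
  have hcard := Set.ncard_add_ncard_compl S
  rw [Nat.card_coe_set_eq] at hodd
  have hind := card_le_indepNum_add_of_ncard_oddComponents_add
    (hα.comap (Embedding.induce Sᶜ).isContained)
    (hodd.trans (Nat.card_coe_set_eq _).symm) (by omega)
  have hle : (Gᶜ.induce Sᶜ).indepNum ≤ G.cliqueNum := by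
    rw [← indepNum_compl]
    exact indepNum_induce_le Sᶜ
  rw [Nat.card_coe_set_eq] at hind
  omega

theorem add_two_le_cliqueNum_add [Finite V] (he : e ≤ 4) (hG : ¬ G.Colorable r)
    (hV : Nat.card V ≤ r + 2 * e) : r + 2 ≤ G.cliqueNum + e := by
  induction r generalizing V e with
  | zero =>
    rw [colorable_zero_iff, not_isEmpty_iff] at hG
    obtain ⟨v⟩ := hG
    have hpos : 0 < Nat.card V := Finite.card_pos_iff.mpr ⟨v⟩
    have hclique : ({v} : Finset V).card ≤ G.cliqueNum :=
      IsClique.card_le_cliqueNum (tc := by simp)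
    rw [Finset.card_singleton] at hclique
    omega
  | succ r ih =>
    by_cases hα : Gᶜ.CliqueFree 3
    · exact add_two_le_cliqueNum_add_of_cliqueFree_three_compl he hα hG hV
    simp only [CliqueFree, not_forall, not_not, isNClique_compl] at hα
    obtain ⟨T, hT, hTcard⟩ := hα
    have hcard := Set.ncard_add_ncard_compl (T : Set V)
    rw [Set.ncard_coe_finset, hTcard] at hcard
    have hcol := hG.imp (colorable_succ_of_colorable_induce_compl hT)
    have hr : r < (↑T : Set V)ᶜ.ncard := by
      by_contra! hle
      have := Fintype.ofFinite ((↑T)ᶜ : Set V)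
      refine hcol ((colorable_of_fintype _).mono ?_)
      rwa [← Nat.card_eq_fintype_card, Nat.card_coe_set_eq]
    have hrec := ih (G := G.induce (↑T)ᶜ) (e := e - 1) (by omega) hcol
      (by rw [Nat.card_coe_set_eq]; omega)
    have hle := G.cliqueNum_induce_le (↑T)ᶜ
    omega

theorem add_two_mul_lt_card_of_cliqueFree [Finite V] (he : e ≤ 4) (hqe : q + e = r + 2)
    (hG : G.CliqueFree q) (hχ : (r + 1 : ℕ∞) ≤ G.chromaticNumber) :
    r + 2 * e < Nat.card V := by
  by_contra! hV
  have hclique := add_two_le_cliqueNum_add he (not_colorable_iff_lt_chromaticNumber.mpr hχ) hV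
  obtain ⟨K, hK⟩ := G.exists_isNClique_cliqueNum
  exact hG.mono (by omega) K hK

/-- The shift graph on a linear order `α`: its vertices are the pairs `i < j`, and `(i, j)` is
adjacent to `(j, k)`. It supplies triangle-free graphs of arbitrarily large chromatic number. -/
def shiftGraph (α : Type*) [LinearOrder α] : SimpleGraph {p : α × α // p.1 < p.2} where
  Adj p p' := p.1.2 = p'.1.1 ∨ p'.1.2 = p.1.1
  symm := ⟨fun _ _ => Or.symm⟩
  loopless := ⟨fun p hp => p.2.ne' (or_self_iff.mp hp)⟩

lemma shiftGraph_cliqueFree_three (α : Type*) [LinearOrder α] : (shiftGraph α).CliqueFree 3 := by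
  rintro s hs
  obtain ⟨a, b, c, hab, hac, hbc, -⟩ := is3Clique_iff.mp hs
  simp only [shiftGraph] at hab hac hbc
  grind

lemma card_le_two_pow_of_colorable_shiftGraph {α : Type*} [LinearOrder α]
    (h : (shiftGraph α).Colorable r) : Nat.card α ≤ 2 ^ r := by
  obtain ⟨C⟩ := h
  let outColors (i : α) : Set (Fin r) := {c | ∃ (j : α) (hij : i < j), C ⟨(i, j), hij⟩ = c}
  have hne {i j : α} (hij : i < j) : outColors i ≠ outColors j := by
    intro heq
    have hmem : C ⟨(i, j), hij⟩ ∈ outColors i := ⟨j, hij, rfl⟩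
    rw [heq] at hmem
    obtain ⟨k, hjk, hC⟩ := hmem
    exact C.valid (Or.inr rfl) hC
  have hinj : Function.Injective outColors :=
    fun i j hij => by_contra fun h => (lt_or_gt_of_ne h).elim (hne · hij) (hne · hij.symm)
  simpa using Nat.card_le_card_of_injective outColors hinj

lemma exists_fin_cliqueFree_three_and_lt_chromaticNumber (r : ℕ) :
    ∃ (n : ℕ) (G : SimpleGraph (Fin n)),
      G.CliqueFree 3 ∧ (r + 1 : ℕ∞) ≤ G.chromaticNumber := by
  let φ := Iso.comap (Fintype.equivFin _).symm (shiftGraph (Fin (2 ^ r + 1)))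
  refine ⟨_, _, (shiftGraph_cliqueFree_three _).comap φ.toEmbedding.isContained, ?_⟩
  rw [← not_colorable_iff_lt_chromaticNumber]
  intro h
  have hcard := card_le_two_pow_of_colorable_shiftGraph (h.of_hom φ.symm.toHom)
  simp at hcard

theorem stmt_0_general {r q e : ℕ} (he : e ≤ 4) (hq : 3 ≤ q) (hqe : q + e = r + 2) :
    (∀ (V : Type u) [Fintype V] (G : SimpleGraph V),
        G.CliqueFree q → (r + 1 : ℕ∞) ≤ G.chromaticNumber →
        r + 2 * e + 1 ≤ Fintype.card V) ∧
    r + 2 * e + 1 ≤ folkman r q := by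
  constructor
  · intro V _ G hG hχ
    rw [← Nat.card_eq_fintype_card]
    exact add_two_mul_lt_card_of_cliqueFree he hqe hG hχ
  · obtain ⟨n, G, hG, hχ⟩ := exists_fin_cliqueFree_three_and_lt_chromaticNumber r
    have hne : {n : ℕ | ∃ G : SimpleGraph (Fin n),
        G.CliqueFree q ∧ (r + 1 : ℕ∞) ≤ G.chromaticNumber}.Nonempty :=
      ⟨n, G, hG.mono hq, hχ⟩
    obtain ⟨G', hG', hχ'⟩ := Nat.sInf_mem hne
    simpa [folkman] using add_two_mul_lt_card_of_cliqueFree he hqe hG' hχ'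

end

theorem stmt_0 (r : ℕ) (hr : 4 ≤ r) :
    (∀ (V : Type) [Fintype V] (G : SimpleGraph V),
        G.CliqueFree (r - 1) → (r + 1 : ℕ∞) ≤ G.chromaticNumber →
        r + 7 ≤ Fintype.card V) ∧
    r + 7 ≤ folkman r (r - 1) :=
  stmt_0_general (e := 3) (by omega) (by omega) (by omega)
end

section
/- For every integer r ≥ 6, the vertex Folkman number F_v(2_r; r−1) equals r+7; that is, every K_{r−1}-free finite simple graph G with χ(G) ≥ r+1 has at least r+7 vertices, and there exists a K_{r−1}-free finite simple graph on exactly r+7 vertices with chromatic number at least r+1. -/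
open SimpleGraph

/-!
Let `G` have `n` vertices and clique number `ω`. The lower bound follows from the inequality
`3 (r + 1) ≤ 2 ω + n`, valid when `G` is not `r`-colourable and `n ≤ r + 6`. Removing independent
triples reduces it to the case that the complement `H` of `G` is triangle-free. The edges and the
unmatched vertices of a maximum matching of `H` colour `G`, so the number `s` of matched vertices is
at most `10`, and one needs an independent set of `H` with at least `n - 3 s / 4` vertices.

The unmatched vertices are independent, and augmenting paths show that at least half of the matched
vertices have no unmatched neighbour. By Ramsey's bound `R(3, k) ≤ k (k + 1) / 2`, these contain
`s / 4` independent vertices unless `s = 10` and there are exactly five of them. In that case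
augmenting paths confine the edges between matched and unmatched vertices to a single unmatched
vertex `u`, and `R(3, 4) ≤ 10` applies to the matched vertices together with `u`.

Equality comes from the join of `K_{r - 6}` with the complement of the `13`-vertex Ramsey
`(3, 5)`-graph, which is not `6`-colourable since its independent sets have at most two vertices.
-/

section IndependentSets

variable {V : Type*} {H : SimpleGraph V}

lemma isNIndepSet_union [DecidableEq V] {I J : Finset V} {m n : ℕ} (hI : H.IsNIndepSet m I)
    (hJ : H.IsNIndepSet n J) (hIJ : Disjoint I J) (hadj : ∀ v ∈ I, ∀ w ∈ J, ¬H.Adj v w) :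
    H.IsNIndepSet (m + n) (I ∪ J) where
  isIndepSet := by
    rw [IsIndepSet, Finset.coe_union, Set.pairwise_union]
    exact ⟨hI.isIndepSet, hJ.isIndepSet,
      fun v hv w hw _ => ⟨hadj v hv w hw, fun h => hadj v hv w hw h.symm⟩⟩
  card_eq := by rw [Finset.card_union_of_disjoint hIJ, hI.card_eq, hJ.card_eq]

/- The neighbours of any vertex form an independent set, which settles the case of a vertex of
degree at least `k + 1`; a vertex of smaller degree joins an independent set of non-neighbours. -/
lemma exists_isNIndepSet_of_choose_two_le_card (hH : H.CliqueFree 3) (k : ℕ) (S : Finset V)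
    (hS : (k + 1).choose 2 ≤ S.card) : ∃ T ⊆ S, H.IsNIndepSet k T := by
  classical
  induction k generalizing S with
  | zero => exact ⟨∅, S.empty_subset, by simp [isNIndepSet_iff]⟩
  | succ k ih =>
    have hchoose : (k + 1 + 1).choose 2 = k + 1 + (k + 1).choose 2 := by
      rw [Nat.choose_succ_succ', Nat.choose_one_right]
    obtain ⟨v, hv⟩ : S.Nonempty := by rw [← Finset.card_pos]; omega
    rcases le_or_gt (k + 1) (S.filter (H.Adj v)).card with hdeg | hdeg
    · obtain ⟨T, hTS, hT⟩ := Finset.exists_subset_card_eq hdeg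
      refine ⟨T, hTS.trans (Finset.filter_subset _ _), ?_, hT⟩
      exact (isIndepSet_neighborSet_of_triangleFree H hH v).mono
        fun w hw => (Finset.mem_filter.1 (hTS hw)).2
    · have hsplit := Finset.card_filter_add_card_filter_not (s := S) (H.Adj v)
      have herase := Finset.card_erase_add_one
        (Finset.mem_filter.2 ⟨hv, H.irrefl⟩ : v ∈ S.filter (¬H.Adj v ·))
      obtain ⟨T, hTS, hT⟩ := ih ((S.filter (¬H.Adj v ·)).erase v) (by omega)
      simp only [Finset.subset_iff, Finset.mem_erase, Finset.mem_filter] at hTS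
      refine ⟨T ∪ {v}, ?_, isNIndepSet_union hT (by simp [isNIndepSet_iff]) ?_ ?_⟩
      · grind
      · rw [Finset.disjoint_singleton_right]
        exact fun hvT => (hTS hvT).1 rfl
      · rintro w hw _ hv'
        rw [Finset.mem_singleton.1 hv', H.adj_comm]
        exact (hTS hw).2.2

lemma exists_isNIndepSet_three_of_not_adj_sdiff [DecidableEq V] (hH : H.CliqueFree 3)
    {D P : Finset V} (hD : 5 ≤ D.card) (hPD : P ⊆ D) (hP : P.Nonempty) (hDP : (D \ P).Nonempty)
    (hadj : ∀ v ∈ P, ∀ w ∈ D \ P, ¬H.Adj v w) : ∃ T ⊆ D, H.IsNIndepSet 3 T := by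
  have hcard := Finset.card_sdiff_add_card_eq_card hPD
  have hpart (p q : ℕ) (hp : (p + 1).choose 2 ≤ P.card) (hq : (q + 1).choose 2 ≤ (D \ P).card) :
      ∃ T ⊆ D, H.IsNIndepSet (p + q) T := by
    obtain ⟨I, hIP, hI⟩ := exists_isNIndepSet_of_choose_two_le_card hH p P hp
    obtain ⟨J, hJP, hJ⟩ := exists_isNIndepSet_of_choose_two_le_card hH q (D \ P) hq
    exact ⟨I ∪ J, Finset.union_subset (hIP.trans hPD) (hJP.trans Finset.sdiff_subset),
      isNIndepSet_union hI hJ (Finset.disjoint_sdiff.mono hIP hJP)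
        fun v hv w hw => hadj v (hIP hv) w (hJP hw)⟩
  have := hP.card_pos
  have := hDP.card_pos
  rcases le_or_gt 3 P.card with hlarge | hsmall
  · exact hpart 2 1 hlarge (by simpa)
  · exact hpart 1 2 (by simpa) (by change 3 ≤ _; omega)

end IndependentSets

section Matchings

variable {V : Type*} {H : SimpleGraph V} {σ : Equiv.Perm V}

/-- A matching of `H`, encoded as the involution that exchanges the two ends of every matching edge
and fixes the unmatched vertices; `σ.support` is then the set of matched vertices. -/
structure IsMatchingPerm (H : SimpleGraph V) (σ : Equiv.Perm V) : Prop where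
  involutive : Function.Involutive σ
  adj : ∀ v, σ v ≠ v → H.Adj v (σ v)

/-- The matching obtained from `σ` by adding the edge `xy` at an unmatched vertex `x` and removing
the former matching edge at `y`, if there is one. -/
def rematchPerm [DecidableEq V] (σ : Equiv.Perm V) (x y : V) : Equiv.Perm V :=
  σ * Equiv.swap y (σ y) * Equiv.swap x y

namespace IsMatchingPerm

variable [DecidableEq V]

lemma rematchPerm_apply (hσ : IsMatchingPerm H σ) {x y : V} (hσx : σ x = x) (hxy : x ≠ y) (w : V) :
    rematchPerm σ x y w = if w = x then y else if w = y then x else if w = σ y then w else σ w := by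
  have hσσ := hσ.involutive y
  have hxσy : x ≠ σ y := fun h => hxy (σ.injective (hσx.trans h))
  simp only [rematchPerm, Equiv.Perm.mul_apply, Equiv.swap_apply_def]
  grind

lemma rematch (hσ : IsMatchingPerm H σ) {x y : V} (hσx : σ x = x) (hxy : H.Adj x y) :
    IsMatchingPerm H (rematchPerm σ x y) := by
  have happly := hσ.rematchPerm_apply hσx hxy.ne
  have hσσ := hσ.involutive
  constructor
  · intro w
    have := hσσ w
    have := hσσ y
    rw [happly (rematchPerm σ x y w), happly w]
    grind
  · intro w hw
    have := hσ.adj w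
    have := hxy.symm
    grind

variable [Fintype V]

lemma two_dvd_card_support (hσ : IsMatchingPerm H σ) : 2 ∣ σ.support.card :=
  Equiv.Perm.two_dvd_card_support (Equiv.ext fun v => by simpa [sq] using hσ.involutive v)

lemma colorable_compl (hσ : IsMatchingPerm H σ) :
    Hᶜ.Colorable (Fintype.card V - σ.support.card / 2) := by
  let edge (v : V) : Sym2 V := s(v, σ v)
  have hedge {v w : V} (h : edge v = edge w) : v = w ∨ w = σ v := by
    have := hσ.involutive w
    rcases Sym2.eq_iff.1 h with h | h <;> grind
  let C : Hᶜ.Coloring (Finset.univ.image edge) := Coloring.mk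
    (fun v => ⟨edge v, Finset.mem_image_of_mem _ (Finset.mem_univ v)⟩) (by
      intro v w hvw heq
      obtain rfl | rfl := hedge (congrArg Subtype.val heq)
      · exact hvw.ne rfl
      · exact hvw.2 (hσ.adj v hvw.ne.symm))
  have hmatched : 2 * (σ.support.image edge).card ≤ σ.support.card := by
    refine Finset.mul_card_image_le_card _ 2 fun c hc => ?_
    obtain ⟨v, hv, rfl⟩ := Finset.mem_image.1 hc
    rw [Equiv.Perm.mem_support] at hv
    rw [← Finset.card_pair hv.symm]
    refine Finset.card_le_card fun w hw => ?_
    have := hσ.involutive v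
    simp only [Finset.mem_insert, Finset.mem_singleton] at hw
    rcases hw with rfl | rfl <;> simp [edge, hv, hv.symm, this]
  have hunmatched : (σ.supportᶜ.image edge).card ≤ σ.supportᶜ.card := Finset.card_image_le
  have hunion := Finset.card_union_le (σ.support.image edge) (σ.supportᶜ.image edge)
  rw [← Finset.image_union, Finset.union_compl] at hunion
  have hcompl := Finset.card_add_card_compl σ.support
  exact C.colorable.mono (by rw [Fintype.card_coe]; omega)

end IsMatchingPerm

variable [Fintype V] [DecidableEq V]

/-- A matching with the largest possible number of matched vertices. -/
structure IsMaximumMatchingPerm (H : SimpleGraph V) (σ : Equiv.Perm V) : Prop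
    extends IsMatchingPerm H σ where
  card_support_le : ∀ τ, IsMatchingPerm H τ → τ.support.card ≤ σ.support.card

/-- The matched vertices without unmatched neighbours. -/
noncomputable def detached (H : SimpleGraph V) (σ : Equiv.Perm V) : Finset V :=
  open Classical in {v ∈ σ.support | ∀ u, σ u = u → ¬H.Adj u v}

lemma mem_detached {v : V} :
    v ∈ detached H σ ↔ σ v ≠ v ∧ ∀ u, σ u = u → ¬H.Adj u v := by
  simp [detached]

lemma detached_subset_support : detached H σ ⊆ σ.support :=
  fun _ hv => Equiv.Perm.mem_support.2 (mem_detached.1 hv).1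

lemma exists_isMaximumMatchingPerm (H : SimpleGraph V) : ∃ σ, IsMaximumMatchingPerm H σ := by
  obtain ⟨σ, hσ, hmax⟩ := Set.exists_max_image {σ | IsMatchingPerm H σ}
    (fun σ => σ.support.card) (Set.toFinite _) ⟨1, fun _ => rfl, fun _ h => absurd rfl h⟩
  exact ⟨σ, hσ, hmax⟩

namespace IsMaximumMatchingPerm

lemma rematch (hσ : IsMaximumMatchingPerm H σ) {x y : V} (hσx : σ x = x) (hxy : H.Adj x y) :
    IsMaximumMatchingPerm H (rematchPerm σ x y) where
  toIsMatchingPerm := hσ.toIsMatchingPerm.rematch hσx hxy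
  card_support_le τ hτ := by
    refine (hσ.card_support_le τ hτ).trans ?_
    have hsub : insert x (σ.support.erase (σ y)) ⊆ (rematchPerm σ x y).support := by
      intro w
      have := hxy.ne
      simp only [Finset.mem_insert, Finset.mem_erase, Equiv.Perm.mem_support,
        hσ.rematchPerm_apply hσx hxy.ne]
      grind
    have hcard := Finset.card_le_card hsub
    rw [Finset.card_insert_of_notMem (by simp [hσx])] at hcard
    have := Finset.pred_card_le_card_erase (s := σ.support) (a := σ y)
    omega

lemma not_adj_of_unmatched (hσ : IsMaximumMatchingPerm H σ) {x y : V} (hσx : σ x = x)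
    (hσy : σ y = y) : ¬H.Adj x y := by
  intro hxy
  have hlarger : insert x σ.support ⊆ (rematchPerm σ x y).support := by
    intro w
    have := hxy.ne
    simp only [Finset.mem_insert, Equiv.Perm.mem_support, hσ.rematchPerm_apply hσx hxy.ne]
    grind
  have hcard := Finset.card_le_card hlarger
  rw [Finset.card_insert_of_notMem (by simp [hσx])] at hcard
  have := hσ.card_support_le _ (hσ.toIsMatchingPerm.rematch hσx hxy)
  omega

/- Otherwise `u, σ b, b, b', σ b', u'` (or `u, σ b, b, u'` if `b' = σ b`) is an augmenting path. -/
lemma not_adj_of_adj_mates (hσ : IsMaximumMatchingPerm H σ) {u u' b b' : V} (huu' : u ≠ u')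
    (hu : σ u = u) (hu' : σ u' = u') (hub : H.Adj u (σ b)) (hub' : H.Adj u' (σ b')) :
    ¬H.Adj b b' := by
  intro hbb'
  have hσb : σ b ≠ b := fun h => hσ.not_adj_of_unmatched hu h (h ▸ hub)
  have hσb' : σ b' ≠ b' := fun h => hσ.not_adj_of_unmatched hu' h (h ▸ hub')
  have hne := hbb'.ne
  have hσσ := hσ.involutive
  have hσσb := hσσ b
  have hσσb' := hσσ b'
  have hτ := hσ.rematch hu hub
  have hτ_apply := hσ.rematchPerm_apply hu hub.ne
  have hτb : rematchPerm σ u (σ b) b = b := by grind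
  have hτu' : rematchPerm σ u (σ b) u' = u' := by grind
  rcases eq_or_ne b' (σ b) with rfl | hb'
  · exact hτ.not_adj_of_unmatched hτu' hτb (hσσb ▸ hub')
  · have hρ_apply := hτ.rematchPerm_apply hτu' hub'.ne
    exact (hτ.rematch hτu' hub').not_adj_of_unmatched (x := b) (y := b')
      (by grind) (by grind) hbb'

lemma isNIndepSet_compl_support (hσ : IsMaximumMatchingPerm H σ) :
    H.IsNIndepSet σ.supportᶜ.card σ.supportᶜ := by
  refine ⟨fun v hv w hw _ => hσ.not_adj_of_unmatched ?_ ?_, rfl⟩ <;> simp_all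

lemma mate_mem_detached (hσ : IsMaximumMatchingPerm H σ) (hH : H.CliqueFree 3) {v : V}
    (hv : v ∈ σ.support) (hvD : v ∉ detached H σ) : σ v ∈ detached H σ := by
  rw [Equiv.Perm.mem_support] at hv
  rw [mem_detached] at hvD ⊢
  push Not at hvD
  obtain ⟨u, hu, huv⟩ := hvD hv
  refine ⟨fun h => hv (σ.injective h), fun u' hu' hu'v => ?_⟩
  have hvσv := hσ.adj v hv
  rcases eq_or_ne u u' with rfl | huu'
  · exact hH {u, v, σ v} (is3Clique_triple_iff.2 ⟨huv, hu'v, hvσv⟩)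
  · refine hσ.not_adj_of_adj_mates huu' hu hu' (b := σ v) (b' := v) ?_ hu'v hvσv.symm
    rwa [hσ.involutive v]

lemma card_support_sdiff_detached_le (hσ : IsMaximumMatchingPerm H σ) (hH : H.CliqueFree 3) :
    (σ.support \ detached H σ).card ≤ (detached H σ).card := by
  refine Finset.card_le_card_of_injOn σ (fun v hv => ?_) σ.injective.injOn
  exact hσ.mate_mem_detached hH (Finset.mem_sdiff.1 hv).1 (Finset.mem_sdiff.1 hv).2

lemma mate_notMem_detached (hσ : IsMaximumMatchingPerm H σ) (hH : H.CliqueFree 3)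
    (hcard : (detached H σ).card ≤ (σ.support \ detached H σ).card) {v : V}
    (hv : v ∈ detached H σ) : σ v ∉ detached H σ := by
  obtain ⟨w, hw, rfl⟩ := Finset.surjOn_of_injOn_of_card_le σ
    (fun w hw => hσ.mate_mem_detached hH (Finset.mem_sdiff.1 hw).1 (Finset.mem_sdiff.1 hw).2)
    σ.injective.injOn hcard hv
  rw [hσ.involutive w]
  exact (Finset.mem_sdiff.1 hw).2

lemma card_add_le_indepNum_add_card_support (hσ : IsMaximumMatchingPerm H σ) {T : Finset V} {k : ℕ}
    (hTD : T ⊆ detached H σ) (hT : H.IsNIndepSet k T) :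
    Fintype.card V + k ≤ H.indepNum + σ.support.card := by
  have hunion : H.IsNIndepSet (σ.supportᶜ.card + k) (σ.supportᶜ ∪ T) := by
    refine isNIndepSet_union hσ.isNIndepSet_compl_support hT ?_ fun u hu v hv => ?_
    · exact disjoint_compl_left.mono_right (hTD.trans detached_subset_support)
    · exact (mem_detached.1 (hTD hv)).2 u (by simpa using hu)
  have := hunion.isIndepSet.card_le_indepNum
  have := hunion.card_eq
  have := σ.support.card_add_card_compl
  omega

/- If `u ≠ u'`, no edge of `D` leaves the set of all `v` with `u` adjacent to `σ v`, so this set is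
all of `D`; but then no edge of `D` leaves `{b'}` either. -/
lemma eq_of_adj_mates (hσ : IsMaximumMatchingPerm H σ) (hH : H.CliqueFree 3) {D : Finset V}
    (hD : 5 ≤ D.card) (hindep : ∀ T ⊆ D, ¬H.IsNIndepSet 3 T)
    (hmate : ∀ v ∈ D, ∃ u, σ u = u ∧ H.Adj u (σ v)) {u u' b b' : V} (hu : σ u = u)
    (hu' : σ u' = u') (hb : b ∈ D) (hb' : b' ∈ D) (hub : H.Adj u (σ b)) (hub' : H.Adj u' (σ b')) :
    u = u' := by
  classical
  by_contra huu'
  have hnosplit {P : Finset V} (hPD : P ⊆ D) (hP : P.Nonempty)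
      (hadj : ∀ v ∈ P, ∀ w ∈ D \ P, ¬H.Adj v w) : D \ P = ∅ := by
    by_contra hDP
    obtain ⟨T, hTD, hT⟩ := exists_isNIndepSet_three_of_not_adj_sdiff hH hD hPD hP
      (Finset.nonempty_iff_ne_empty.2 hDP) hadj
    exact hindep T hTD hT
  have hall : ∀ v ∈ D, H.Adj u (σ v) := by
    have hempty := hnosplit (P := {v ∈ D | H.Adj u (σ v)}) (Finset.filter_subset _ _)
      ⟨b, Finset.mem_filter.2 ⟨hb, hub⟩⟩ fun v hv w hw => by
        simp only [Finset.mem_sdiff, Finset.mem_filter, not_and] at hv hw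
        obtain ⟨x, hx, hxw⟩ := hmate w hw.1
        exact hσ.not_adj_of_adj_mates (by rintro rfl; exact hw.2 hw.1 hxw) hu hx hv.2 hxw
    intro v hv
    exact (Finset.mem_filter.1 (Finset.sdiff_eq_empty_iff_subset.1 hempty hv)).2
  have hsingleton := hnosplit (Finset.singleton_subset_iff.2 hb') (Finset.singleton_nonempty b')
    fun v hv w hw => by
      rw [Finset.mem_singleton.1 hv]
      exact hσ.not_adj_of_adj_mates (Ne.symm huu') hu' hu hub' (hall w (Finset.mem_sdiff.1 hw).1)
  have := Finset.card_le_card (Finset.sdiff_eq_empty_iff_subset.1 hsingleton)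
  rw [Finset.card_singleton] at this
  omega

lemma card_add_three_le_of_unique_unmatched_adj (hσ : IsMaximumMatchingPerm H σ)
    (hH : H.CliqueFree 3) (hsupp : 9 ≤ σ.support.card) {u : V} (hu : σ u = u)
    (hunique : ∀ w, σ w = w → ∀ v ∈ detached H σ, H.Adj w (σ v) → w = u) :
    Fintype.card V + 3 ≤ H.indepNum + σ.support.card := by
  set W := insert u σ.support
  have hW : W.card = σ.support.card + 1 := Finset.card_insert_of_notMem (by simpa)
  have hisolated : ∀ w ∈ Wᶜ, ∀ v ∈ W, ¬H.Adj w v := by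
    intro w hw v hv hwv
    simp only [W, Finset.mem_compl, Finset.mem_insert, not_or, Equiv.Perm.notMem_support] at hw hv
    rcases hv with rfl | hv
    · exact hσ.not_adj_of_unmatched hw.2 hu hwv
    by_cases hvD : v ∈ detached H σ
    · exact (mem_detached.1 hvD).2 w hw.2 hwv
    · exact hw.1 (hunique w hw.2 (σ v) (hσ.mate_mem_detached hH hv hvD)
        (by rwa [hσ.involutive v]))
  obtain ⟨T, hTW, hT⟩ := exists_isNIndepSet_of_choose_two_le_card hH 4 W
    (by rw [hW]; exact Nat.succ_le_succ hsupp)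
  have hWc : H.IsNIndepSet Wᶜ.card Wᶜ :=
    ⟨hσ.isNIndepSet_compl_support.isIndepSet.mono (by simp [W]), rfl⟩
  have hunion := isNIndepSet_union hWc hT (disjoint_compl_left.mono_right hTW)
    fun w hw v hv => hisolated w hw v (hTW hv)
  have := hunion.isIndepSet.card_le_indepNum
  have := hunion.card_eq
  have := W.card_add_card_compl
  omega

lemma card_add_three_le_of_card_detached_eq_five (hσ : IsMaximumMatchingPerm H σ)
    (hH : H.CliqueFree 3) (hsupp : σ.support.card = 10) (hD : (detached H σ).card = 5) :
    Fintype.card V + 3 ≤ H.indepNum + σ.support.card := by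
  by_cases hindep : ∃ T ⊆ detached H σ, H.IsNIndepSet 3 T
  · obtain ⟨T, hTD, hT⟩ := hindep
    exact hσ.card_add_le_indepNum_add_card_support hTD hT
  push Not at hindep
  have hsdiff := Finset.card_sdiff_add_card_eq_card (detached_subset_support (H := H) (σ := σ))
  have hmate : ∀ v ∈ detached H σ, ∃ u, σ u = u ∧ H.Adj u (σ v) := fun v hv => by
    have hσv := hσ.mate_notMem_detached hH (by omega) hv
    simpa [mem_detached, (mem_detached.1 hv).1] using hσv
  obtain ⟨b, hb⟩ : (detached H σ).Nonempty := by rw [← Finset.card_pos]; omega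
  obtain ⟨u, hu, hub⟩ := hmate b hb
  exact hσ.card_add_three_le_of_unique_unmatched_adj hH (by omega) hu fun w hw v hv hwv =>
    hσ.eq_of_adj_mates hH hD.ge hindep hmate hw hu hv hb hwv hub

lemma four_mul_card_le_four_mul_indepNum_add (hσ : IsMaximumMatchingPerm H σ) (hH : H.CliqueFree 3)
    (hsupp : σ.support.card ≤ 10) :
    4 * Fintype.card V ≤ 4 * H.indepNum + 3 * σ.support.card := by
  have hsdiff := Finset.card_sdiff_add_card_eq_card (detached_subset_support (H := H) (σ := σ))
  have hdetached := hσ.card_support_sdiff_detached_le hH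
  have hlarge (k : ℕ) (hk : (k + 1).choose 2 ≤ (detached H σ).card) :
      Fintype.card V + k ≤ H.indepNum + σ.support.card := by
    obtain ⟨T, hTD, hT⟩ := exists_isNIndepSet_of_choose_two_le_card hH k _ hk
    exact hσ.card_add_le_indepNum_add_card_support hTD hT
  obtain ⟨m, hm⟩ := hσ.two_dvd_card_support
  obtain hs | ⟨hs, hD⟩ | ⟨hs, hD⟩ | ⟨hs, hD⟩ :
      σ.support.card = 0 ∨ (σ.support.card ≤ 4 ∧ 1 ≤ (detached H σ).card) ∨
      (σ.support.card ≤ 8 ∧ 3 ≤ (detached H σ).card) ∨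
      (σ.support.card = 10 ∧ 5 ≤ (detached H σ).card) := by omega
  · have := hlarge 0 (Nat.zero_le _)
    omega
  · have := hlarge 1 hD
    omega
  · have := hlarge 2 hD
    omega
  · have : Fintype.card V + 3 ≤ H.indepNum + σ.support.card := by
      rcases hD.eq_or_lt with hD | hD
      · exact hσ.card_add_three_le_of_card_detached_eq_five hH hs hD.symm
      · exact hlarge 3 hD
    omega

end IsMaximumMatchingPerm

end Matchings

section CliqueNumber

variable {V : Type*} {G : SimpleGraph V}

lemma colorable_succ_of_induce_compl {I : Set V} {r : ℕ} (hI : G.IsIndepSet I)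
    (hG : (G.induce Iᶜ).Colorable r) : G.Colorable (r + 1) := by
  classical
  obtain ⟨C⟩ := hG
  let C' : G.Coloring (Option (Fin r)) := Coloring.mk
    (fun v => if hv : v ∈ I then none else some (C ⟨v, hv⟩)) (by
      intro v w hvw
      by_cases hv : v ∈ I <;> by_cases hw : w ∈ I
      · exact absurd hvw (hI hv hw hvw.ne)
      · simp [hv, hw]
      · simp [hv, hw]
      · simpa [hv, hw] using C.valid (v := ⟨v, hv⟩) (w := ⟨w, hw⟩) hvw)
  simpa using C'.colorable

variable [Fintype V]

lemma three_mul_succ_le_of_cliqueFree_compl (hGc : Gᶜ.CliqueFree 3) {r : ℕ} (hG : ¬G.Colorable r)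
    (hcard : Fintype.card V ≤ r + 6) : 3 * (r + 1) ≤ 2 * G.cliqueNum + Fintype.card V := by
  classical
  obtain ⟨σ, hσ⟩ := exists_isMaximumMatchingPerm Gᶜ
  have hcolor : r < Fintype.card V - σ.support.card / 2 := by
    by_contra! h
    exact hG ((compl_compl G ▸ hσ.colorable_compl).mono h)
  obtain ⟨m, hm⟩ := hσ.two_dvd_card_support
  have := hσ.four_mul_card_le_four_mul_indepNum_add hGc (by omega)
  rw [indepNum_compl] at this
  omega

/- Deleting an independent triple lowers the left side by `3` and the right side by at least `3`;
when there is none, the complement is triangle-free. -/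
theorem three_mul_succ_le_two_mul_cliqueNum_add_card {r : ℕ} (hG : ¬G.Colorable r)
    (hcard : Fintype.card V ≤ r + 6) : 3 * (r + 1) ≤ 2 * G.cliqueNum + Fintype.card V := by
  classical
  induction hn : Fintype.card V using Nat.strong_induction_on generalizing V r with
  | _ n ih =>
  subst hn
  by_cases hGc : Gᶜ.CliqueFree 3
  · exact three_mul_succ_le_of_cliqueFree_compl hGc hG hcard
  obtain ⟨I, hI⟩ : ∃ I, G.IsNIndepSet 3 I := by
    simpa [CliqueFree] using hGc
  have hIc : Fintype.card ↥((I : Set V)ᶜ) + 3 = Fintype.card V := by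
    rw [← hI.card_eq, Fintype.card_compl_set]
    simp [I.card_le_univ]
  cases r with
  | zero => omega
  | succ r =>
    have := ih _ (by omega) (G := G.induce (I : Set V)ᶜ) (r := r)
      (fun h => hG (colorable_succ_of_induce_compl hI.isIndepSet h)) (by omega) rfl
    have := cliqueNum_induce_le (G := G) (I : Set V)ᶜ
    omega

lemma add_seven_le_card_of_cliqueFree {r : ℕ} (hclique : G.CliqueFree (r - 1))
    (hG : ¬G.Colorable r) : r + 7 ≤ Fintype.card V := by
  by_contra! hcard
  have := three_mul_succ_le_two_mul_cliqueNum_add_card hG (by omega)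
  obtain ⟨K, hK⟩ := G.exists_isNClique_cliqueNum
  exact hclique.mono (by omega : r - 1 ≤ G.cliqueNum) K hK

end CliqueNumber

section Join

variable {V : Type*} {G : SimpleGraph V}

lemma card_le_mul_indepNum [Fintype V] {r : ℕ} (hG : G.Colorable r) :
    Fintype.card V ≤ G.indepNum * r := by
  classical
  obtain ⟨C⟩ := hG
  simpa using Finset.card_le_mul_card_image_of_maps_to (s := Finset.univ) (f := C)
    (fun v _ => Finset.mem_univ (C v)) G.indepNum fun c _ =>
      IsIndepSet.card_le_indepNum fun v hv w hw _ hvw => C.valid hvw <| by simp_all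

/-- The join of `G` with the complete graph on `W`, written as the complement of the disjoint union
of the two complements. -/
def joinTop (G : SimpleGraph V) (W : Type*) : SimpleGraph (V ⊕ W) := (Gᶜ ⊕g ⊥)ᶜ

variable {W : Type*} [Fintype W]

lemma cliqueFree_joinTop {k : ℕ} (hG : G.CliqueFree k) :
    (joinTop G W).CliqueFree (k + Fintype.card W) := by
  intro s hs
  have hleft : G.IsClique s.toLeft := by
    intro v hv w hw hvw
    simpa [joinTop, hvw] using
      hs.isClique (Finset.mem_toLeft.1 hv) (Finset.mem_toLeft.1 hw) (Sum.inl_injective.ne hvw)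
  have hsplit := s.card_toLeft_add_card_toRight
  have hright := s.toRight.card_le_univ
  have hcard := hs.card_eq
  exact hG.mono (by omega) s.toLeft ⟨hleft, rfl⟩

lemma colorable_of_colorable_joinTop {m : ℕ} (hG : (joinTop G W).Colorable (m + Fintype.card W)) :
    G.Colorable m := by
  classical
  obtain ⟨C⟩ := hG
  have hinj : Function.Injective (C ∘ Sum.inr) := fun v w hvw => by
    by_contra hne
    exact C.valid (v := .inr v) (w := .inr w) (by simpa [joinTop]) hvw
  let S := Finset.univ.image (C ∘ Sum.inr)
  let C' : G.Coloring ↥Sᶜ := Coloring.mk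
    (fun v => ⟨C (.inl v), by
      suffices ∀ w, C (.inr w) ≠ C (.inl v) by simpa [S]
      exact fun w => C.valid (by simp [joinTop])⟩)
    fun {v w} hvw heq => C.valid (v := .inl v) (w := .inl w) (by simp [joinTop, hvw, hvw.ne])
      (congrArg Subtype.val heq)
  have hS : Fintype.card ↥Sᶜ = m := by
    rw [Fintype.card_coe, Finset.card_compl, Finset.card_image_of_injective _ hinj]
    simp
  exact hS ▸ C'.colorable

end Join

section ExtremalGraph

lemma cliqueFree_five_of_forall_not_adj {V : Type*} {G : SimpleGraph V}
    (h : ∀ a b, G.Adj a b → ∀ c, G.Adj a c ∧ G.Adj b c → ∀ d, G.Adj a d ∧ G.Adj b d ∧ G.Adj c d →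
      ∀ e, ¬(G.Adj a e ∧ G.Adj b e ∧ G.Adj c e ∧ G.Adj d e)) : G.CliqueFree 5 := by
  rw [cliqueFree_iff]
  refine ⟨fun f => ?_⟩
  have hadj {i j : Fin 5} (hij : i ≠ j) : G.Adj (f i) (f j) := f.toHom.map_rel hij
  exact h (f 0) (f 1) (hadj (by decide)) (f 2) ⟨hadj (by decide), hadj (by decide)⟩ (f 3)
    ⟨hadj (by decide), hadj (by decide), hadj (by decide)⟩ (f 4)
    ⟨hadj (by decide), hadj (by decide), hadj (by decide), hadj (by decide)⟩

/-- The complement of the Ramsey `(3, 5)`-graph on 13 vertices: residues modulo 13 are adjacent when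
their difference is not one of the cubes `0, ±1, ±5`. The connection set lists the noncubes up to
sign, `circulantGraph` adds their negatives. -/
def cubicNonresidueGraph : SimpleGraph (ZMod 13) := circulantGraph {2, 3, 4, 6}

instance : DecidableRel cubicNonresidueGraph.Adj :=
  inferInstanceAs (DecidableRel (circulantGraph _).Adj)

lemma cliqueFree_cubicNonresidueGraph : cubicNonresidueGraph.CliqueFree 5 :=
  cliqueFree_five_of_forall_not_adj (by decide +kernel)

lemma indepNum_cubicNonresidueGraph_le : cubicNonresidueGraph.indepNum ≤ 2 := by
  have htriple : ∀ a b, cubicNonresidueGraphᶜ.Adj a b → ∀ c, cubicNonresidueGraphᶜ.Adj a c →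
      ¬cubicNonresidueGraphᶜ.Adj b c := by decide +kernel
  by_contra! hindep
  rw [← cliqueNum_compl] at hindep
  obtain ⟨s, hs⟩ := cubicNonresidueGraphᶜ.exists_isNClique_cliqueNum
  have htriangle : cubicNonresidueGraphᶜ.CliqueFree 3 := fun t ht => by
    obtain ⟨a, b, c, hab, hac, hbc, -⟩ := is3Clique_iff.1 ht
    exact htriple a b hab c hac hbc
  exact htriangle.mono hindep s hs

lemma not_colorable_cubicNonresidueGraph : ¬cubicNonresidueGraph.Colorable 6 := fun h => by
  have hcard := card_le_mul_indepNum h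
  have := indepNum_cubicNonresidueGraph_le
  rw [ZMod.card] at hcard
  omega

lemma exists_cliqueFree_not_colorable {r : ℕ} (hr : 6 ≤ r) :
    ∃ G : SimpleGraph (Fin (r + 7)), G.CliqueFree (r - 1) ∧ ¬G.Colorable r := by
  let K := joinTop cubicNonresidueGraph (Fin (r - 6))
  have hcard : Fintype.card (ZMod 13 ⊕ Fin (r - 6)) = r + 7 := by
    rw [Fintype.card_sum, ZMod.card, Fintype.card_fin]
    omega
  let e := Iso.map (Fintype.equivFinOfCardEq hcard) K
  refine ⟨_, CliqueFree.comap ⟨e.symm.toCopy⟩ ?_, fun h => not_colorable_cubicNonresidueGraph ?_⟩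
  · have hK := cliqueFree_joinTop (W := Fin (r - 6)) cliqueFree_cubicNonresidueGraph
    rwa [Fintype.card_fin, show 5 + (r - 6) = r - 1 by omega] at hK
  · apply colorable_of_colorable_joinTop (W := Fin (r - 6))
    rw [Fintype.card_fin, Nat.add_sub_of_le hr]
    exact h.of_hom e.toHom

end ExtremalGraph

lemma add_one_le_chromaticNumber_iff {V : Type*} {G : SimpleGraph V} {r : ℕ} :
    (r + 1 : ℕ∞) ≤ G.chromaticNumber ↔ ¬G.Colorable r := by
  rw [← chromaticNumber_le_iff_colorable, not_le]
  exact ENat.add_one_le_iff (ENat.natCast_ne_top r)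

theorem stmt_1 (r : ℕ) (hr : 6 ≤ r) :
    (∀ (V : Type) [Fintype V] (G : SimpleGraph V),
        G.CliqueFree (r - 1) → (r + 1 : ℕ∞) ≤ G.chromaticNumber →
        r + 7 ≤ Fintype.card V) ∧
    (∃ G : SimpleGraph (Fin (r + 7)),
        G.CliqueFree (r - 1) ∧ (r + 1 : ℕ∞) ≤ G.chromaticNumber) ∧
    folkman r (r - 1) = r + 7 := by
  simp only [folkman, add_one_le_chromaticNumber_iff]
  have hupper := exists_cliqueFree_not_colorable hr
  refine ⟨fun V _ G => add_seven_le_card_of_cliqueFree, hupper,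
    le_antisymm (Nat.sInf_le hupper) (le_csInf ⟨_, hupper⟩ ?_)⟩
  rintro n ⟨G, hclique, hG⟩
  simpa using add_seven_le_card_of_cliqueFree hclique hG
end

section
/- For every integer r ≥ 8, the vertex Folkman number F_v(2_r; r−2) equals r+9; that is, every K_{r−2}-free finite simple graph G with χ(G) ≥ r+1 has at least r+9 vertices, and there exists a K_{r−2}-free finite simple graph on exactly r+9 vertices with chromatic number at least r+1. -/
open SimpleGraph

/-!
A coloring of `G` whose color classes have at most two vertices is a matching of `Gᶜ`, so `G` is
`m`-colorable as soon as `|V|` plus the deficiency of `Gᶜ` is at most `2 m`. Giving a new color to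
an independent set of size 3 lowers `|V|` by 3 and the number of colors by 1, and after four such
steps at most `m` vertices are left. If the process stops early, `Gᶜ` is triangle-free; Gallai's
lemma on factor-critical components and `R(3, q) ≤ q (q + 1) / 2` then bound the deficiency of `Gᶜ`
in terms of its independence number, which is the clique number of `G`.

The extremal graph is the join of a complete graph with the complement of a triangle-free graph on
17 vertices without independent sets of size 6: its color classes are cliques of the latter, so 17
vertices need 9 colors.
-/

universe u

namespace Folkman

open Function

section IndepNum

variable {V : Type*} [Finite V] {G : SimpleGraph V}

lemma indepNum_induce_add_indepNum_induce_le {s t : Set V} (hst : Disjoint s t)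
    (hadj : ∀ x ∈ s, ∀ y ∈ t, ¬ G.Adj x y) :
    (G.induce s).indepNum + (G.induce t).indepNum ≤ G.indepNum := by
  classical
  obtain ⟨a, ha⟩ := (G.induce s).exists_isNIndepSet_indepNum
  obtain ⟨b, hb⟩ := (G.induce t).exists_isNIndepSet_indepNum
  have hab : Disjoint (a.map (.subtype _)) (b.map (.subtype _)) := by
    simp only [Finset.disjoint_left, Finset.mem_map, Embedding.subtype_apply]
    rintro _ ⟨x, -, rfl⟩ ⟨y, -, hyx⟩
    exact hst.notMem_of_mem_left x.2 (hyx ▸ y.2)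
  have hind : G.IsIndepSet ↑(a.map (.subtype _) ∪ b.map (.subtype _)) := by
    simp only [Set.Pairwise, Finset.coe_union, Finset.coe_map, Embedding.subtype_apply]
    rintro _ (⟨x, hx, rfl⟩ | ⟨x, hx, rfl⟩) _ (⟨y, hy, rfl⟩ | ⟨y, hy, rfl⟩) hxy
    · exact ha.isIndepSet hx hy (ne_of_apply_ne _ hxy)
    · exact hadj x x.2 y y.2
    · exact fun h ↦ hadj y y.2 x x.2 h.symm
    · exact hb.isIndepSet hx hy (ne_of_apply_ne _ hxy)
  simpa [Finset.card_union_of_disjoint hab, ha.card_eq, hb.card_eq] using hind.card_le_indepNum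

lemma indepNum_induce_le (s : Set V) : (G.induce s).indepNum ≤ G.indepNum :=
  (Nat.le_add_right _ _).trans
    (indepNum_induce_add_indepNum_induce_le (Set.disjoint_empty s) fun _ _ _ h ↦ h.elim)

lemma indepNum_pos [Nonempty V] : 0 < G.indepNum := by
  obtain ⟨v⟩ := ‹Nonempty V›
  have hv : G.IsIndepSet ({v} : Finset V) := by simp
  exact hv.card_le_indepNum

end IndepNum

/-- The bound `R(3, q) ≤ q (q + 1) / 2`. -/
lemma le_indepNum_of_cliqueFree_three {V : Type u} [Finite V] {G : SimpleGraph V} {q : ℕ}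
    (htri : G.CliqueFree 3) (hcard : q * (q + 1) ≤ 2 * Nat.card V) : q ≤ G.indepNum := by
  induction q generalizing V with
  | zero => exact Nat.zero_le _
  | succ q ih =>
    have : Nonempty V := (Nat.card_pos_iff.1 (by nlinarith)).1
    obtain ⟨v⟩ := this
    rcases le_or_gt (q + 1) (G.neighborSet v).ncard with hdeg | hdeg
    · rw [Set.ncard_eq_toFinset_card _] at hdeg
      refine hdeg.trans (IsIndepSet.card_le_indepNum ?_)
      simpa using G.isIndepSet_neighborSet_of_triangleFree htri v
    · let s : Set V := (insert v (G.neighborSet v))ᶜ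
      have hs : Nat.card V ≤ Nat.card s + (q + 1) := by
        have hsplit := Set.ncard_add_ncard_compl (insert v (G.neighborSet v))
        have hinsert := Set.ncard_insert_le v (G.neighborSet v)
        rw [Nat.card_coe_set_eq]
        grind
      have hq : q ≤ (G.induce s).indepNum :=
        ih (htri.comap ⟨(Embedding.induce s).toCopy⟩) (by nlinarith)
      calc q + 1 ≤ (G.induce s).indepNum + (G.induce {v}).indepNum :=
            add_le_add hq indepNum_pos
        _ ≤ G.indepNum := indepNum_induce_add_indepNum_induce_le
            (by simp [s]) (by rintro x hx _ rfl h; exact hx (.inr h.symm))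

/-- A matching of `G`, encoded as the involution that exchanges the endpoints of each of its edges
and fixes every unmatched vertex. -/
structure IsMatchingInvolution {V : Type*} (G : SimpleGraph V) (f : V → V) : Prop where
  involutive : Involutive f
  adj : ∀ ⦃x⦄, f x ≠ x → G.Adj x (f x)

/-- The least number of vertices left unmatched by a matching of `G`. -/
noncomputable def deficiency {V : Type*} (G : SimpleGraph V) : ℕ :=
  sInf {k | ∃ f, IsMatchingInvolution G f ∧ (fixedPoints f).ncard = k}

/-- A matching of `G`, in the encoding of `IsMatchingInvolution`, that leaves as few vertices
unmatched as possible. -/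
structure IsMaximumMatching {V : Type*} (G : SimpleGraph V) (f : V → V) : Prop
    extends IsMatchingInvolution G f where
  ncard_fixedPoints : (fixedPoints f).ncard = deficiency G

section Matching

variable {V : Type*} {G : SimpleGraph V} {f g : V → V} {s : Set V} {u v t : V}

lemma isMatchingInvolution_id (G : SimpleGraph V) : IsMatchingInvolution G id :=
  ⟨fun _ ↦ rfl, fun _ h ↦ (h rfl).elim⟩

lemma isMatchingInvolution_swap [DecidableEq V] (huv : G.Adj u v) :
    IsMatchingInvolution G (Equiv.swap u v) where
  involutive := Equiv.swap_apply_self u v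
  adj x hx := by
    rcases Equiv.swap_apply_ne_self_iff.1 hx with ⟨-, rfl | rfl⟩
    · simpa using huv
    · simpa using huv.symm

lemma exists_isMaximumMatching (G : SimpleGraph V) : ∃ f, IsMaximumMatching G f := by
  obtain ⟨f, hf, hcard⟩ : deficiency G ∈ {k | ∃ f, IsMatchingInvolution G f ∧ _ = k} :=
    Nat.sInf_mem ⟨_, id, isMatchingInvolution_id G, rfl⟩
  exact ⟨f, hf, hcard⟩

lemma deficiency_le_card (G : SimpleGraph V) : deficiency G ≤ Nat.card V :=
  Nat.sInf_le ⟨id, isMatchingInvolution_id G, by simp⟩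

lemma mapsTo_compl_of_involutive (hf : Involutive f) (hs : Set.MapsTo f s s) :
    Set.MapsTo f sᶜ sᶜ :=
  fun x hx hfx ↦ hx (hf x ▸ hs hfx)

namespace IsMatchingInvolution

lemma deficiency_le (hf : IsMatchingInvolution G f) : deficiency G ≤ (fixedPoints f).ncard :=
  Nat.sInf_le ⟨f, hf, rfl⟩

lemma piecewise [∀ x, Decidable (x ∈ s)] (hf : IsMatchingInvolution G f)
    (hg : IsMatchingInvolution G g) (hfs : Set.MapsTo f s s) (hgs : Set.MapsTo g s s) :
    IsMatchingInvolution G (s.piecewise f g) where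
  involutive x := by
    by_cases hx : x ∈ s
    · simp [hx, hfs hx, hf.involutive x]
    · have := mapsTo_compl_of_involutive hg.involutive hgs hx
      simp_all [hg.involutive x]
  adj x hx := by
    by_cases hxs : x ∈ s
    · simp only [hxs, Set.piecewise_eq_of_mem] at hx ⊢
      exact hf.adj hx
    · simp only [hxs, not_false_eq_true, Set.piecewise_eq_of_notMem] at hx ⊢
      exact hg.adj hx

lemma exists_extension [Finite V] {f : s → s} (hf : IsMatchingInvolution (G.induce s) f) :
    ∃ g, IsMatchingInvolution G g ∧ (∀ x ∉ s, g x = x) ∧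
      (fixedPoints g).ncard = (fixedPoints f).ncard + sᶜ.ncard := by
  let g : V → V := extend Subtype.val (Subtype.val ∘ f) id
  have hg_mem (x : s) : g x = f x := Subtype.val_injective.extend_apply _ _ x
  have hg_notMem (x : V) (hx : x ∉ s) : g x = x := extend_apply' _ _ _ (by simpa using hx)
  have hfixed : fixedPoints g = Subtype.val '' fixedPoints f ∪ sᶜ := by
    ext x
    by_cases hx : x ∈ s
    · lift x to s using hx
      simp [IsFixedPt, hg_mem, Subtype.ext_iff]
    · simp [IsFixedPt, hg_notMem x hx, hx]
  refine ⟨g, ⟨fun x ↦ ?_, fun x hgx ↦ ?_⟩, hg_notMem, ?_⟩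
  · by_cases hx : x ∈ s
    · lift x to s using hx
      rw [hg_mem, hg_mem, hf.involutive]
    · rw [hg_notMem x hx, hg_notMem x hx]
  · have hx : x ∈ s := by_contra fun hx ↦ hgx (hg_notMem x hx)
    lift x to s using hx
    rw [hg_mem] at hgx ⊢
    exact hf.adj (ne_of_apply_ne _ hgx)
  · rw [hfixed, Set.ncard_union_eq, Set.ncard_image_of_injective _ Subtype.val_injective]
    rw [Set.disjoint_compl_right_iff_subset]
    rintro _ ⟨x, -, rfl⟩
    exact x.2

end IsMatchingInvolution

lemma ncard_fixedPoints_piecewise_add [Finite V] [∀ x, Decidable (x ∈ s)] (f g : V → V) :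
    (fixedPoints (s.piecewise f g)).ncard + (fixedPoints (s.piecewise g f)).ncard =
      (fixedPoints f).ncard + (fixedPoints g).ncard := by
  have hsplit (f g : V → V) : (fixedPoints (s.piecewise f g)).ncard =
      (fixedPoints f ∩ s).ncard + (fixedPoints g \ s).ncard := by
    rw [← Set.ncard_inter_add_ncard_sdiff_eq_ncard (fixedPoints (s.piecewise f g)) s]
    congr 2 <;> ext x <;> by_cases hx : x ∈ s <;> simp [IsFixedPt, hx]
  rw [hsplit f g, hsplit g f, ← Set.ncard_inter_add_ncard_sdiff_eq_ncard (fixedPoints f) s,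
    ← Set.ncard_inter_add_ncard_sdiff_eq_ncard (fixedPoints g) s]
  ring

lemma deficiency_le_induce_add_induce_compl [Finite V] (G : SimpleGraph V) (s : Set V) :
    deficiency G ≤ deficiency (G.induce s) + deficiency (G.induce sᶜ) := by
  classical
  obtain ⟨f₁, hf₁⟩ := exists_isMaximumMatching (G.induce s)
  obtain ⟨f₂, hf₂⟩ := exists_isMaximumMatching (G.induce sᶜ)
  obtain ⟨g₁, hg₁, hfix₁, hcard₁⟩ := hf₁.exists_extension
  obtain ⟨g₂, hg₂, hfix₂, hcard₂⟩ := hf₂.exists_extension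
  have hmaps₁ : Set.MapsTo g₁ s s := by
    simpa using mapsTo_compl_of_involutive hg₁.involutive
      (s := sᶜ) fun x hx ↦ (hfix₁ x hx).symm ▸ hx
  have hmaps₂ : Set.MapsTo g₂ s s := fun x hx ↦ by rwa [hfix₂ x (by simpa using hx)]
  have hid : s.piecewise g₂ g₁ = id := by
    ext x
    by_cases hx : x ∈ s
    · simp [hx, hfix₂ x (by simpa using hx)]
    · simp [hx, hfix₁ x hx]
  have hsum := ncard_fixedPoints_piecewise_add (s := s) g₁ g₂
  rw [hid, hcard₁, hcard₂, hf₁.ncard_fixedPoints, hf₂.ncard_fixedPoints, compl_compl,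
    fixedPoints_id, Set.ncard_univ, ← Set.ncard_add_ncard_compl s] at hsum
  have := (hg₁.piecewise hg₂ hmaps₁ hmaps₂).deficiency_le
  omega

namespace IsMaximumMatching

lemma piecewise [Finite V] [∀ x, Decidable (x ∈ s)] (hf : IsMaximumMatching G f)
    (hg : IsMaximumMatching G g) (hfs : Set.MapsTo f s s) (hgs : Set.MapsTo g s s) :
    IsMaximumMatching G (s.piecewise f g) where
  toIsMatchingInvolution := hf.toIsMatchingInvolution.piecewise hg.toIsMatchingInvolution hfs hgs
  ncard_fixedPoints := by
    have hfg := (hf.toIsMatchingInvolution.piecewise hg.toIsMatchingInvolution hfs hgs)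
    have hgf := (hg.toIsMatchingInvolution.piecewise hf.toIsMatchingInvolution hgs hfs)
    have hsum := ncard_fixedPoints_piecewise_add (s := s) f g
    rw [hf.ncard_fixedPoints, hg.ncard_fixedPoints] at hsum
    have := hfg.deficiency_le
    have := hgf.deficiency_le
    omega

lemma not_adj_of_fixed [Finite V] (hf : IsMaximumMatching G f) (hu : f u = u) (hv : f v = v) :
    ¬ G.Adj u v := by
  classical
  intro huv
  let g := ({u, v} : Set V).piecewise (Equiv.swap u v) f
  have hg : IsMatchingInvolution G g :=
    (isMatchingInvolution_swap huv).piecewise hf.toIsMatchingInvolution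
      (by rintro _ (rfl | rfl) <;> simp) (by rintro _ (rfl | rfl) <;> simp [hu, hv])
  have hfixed : fixedPoints g ⊂ fixedPoints f := by
    refine Set.ssubset_iff_of_subset (fun x hx ↦ ?_) |>.2 ⟨u, hu, ?_⟩
    · by_cases hxuv : x ∈ ({u, v} : Set V)
      · rcases hxuv with rfl | rfl <;> assumption
      · simpa [g, IsFixedPt, hxuv] using hx
    · simp [g, IsFixedPt, huv.ne']
  exact (Set.ncard_lt_ncard hfixed).not_ge (hf.ncard_fixedPoints ▸ hg.deficiency_le)

end IsMaximumMatching

section Alternating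

variable {a b : Equiv.Perm V} {x y : V}

/-- Conjugation by an involution `a` inverts `a * b`, so `⟨a, b⟩` is dihedral. -/
lemma apply_mul_zpow_apply (ha : Involutive a) (hb : Involutive b) (ht : b t = t) (i : ℤ) :
    a (((a * b) ^ i) t) = ((a * b) ^ (1 - i)) t := by
  have ha_sq : a * a = 1 := Equiv.ext ha
  have ha_inv : a⁻¹ = a := inv_eq_of_mul_eq_one_left ha_sq
  have hb_inv : b⁻¹ = b := inv_eq_of_mul_eq_one_left (Equiv.ext hb)
  have hconj : a * (a * b) ^ i * a⁻¹ = (a * b) ^ (-i) := by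
    rw [← conj_zpow, zpow_neg, ← inv_zpow, mul_inv_rev, hb_inv, ha_inv, ← mul_assoc,
      ha_sq, one_mul]
  calc a (((a * b) ^ i) t) = (a * (a * b) ^ i * a⁻¹) ((a * b) t) := by simp [ht]
    _ = ((a * b) ^ (1 - i)) t := by
      rw [hconj, ← Equiv.Perm.mul_apply, ← zpow_add_one, neg_add_eq_sub]

lemma sameCycle_apply (ha : Involutive a) (hb : Involutive b) (ht : b t = t)
    (hx : (a * b).SameCycle t x) : (a * b).SameCycle t (a x) ∧ (a * b).SameCycle t (b x) := by
  obtain ⟨i, rfl⟩ := hx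
  have hbx : b (((a * b) ^ i) t) = ((a * b) ^ (-i)) t := by
    rw [← ha (b _), ← Equiv.Perm.mul_apply a b, ← Equiv.Perm.mul_apply (a * b), ← zpow_one_add,
      apply_mul_zpow_apply ha hb ht]
    congr 2
    ring
  exact ⟨⟨1 - i, (apply_mul_zpow_apply ha hb ht i).symm⟩, ⟨-i, hbx.symm⟩⟩

/-- Parametrising the orbit of `t` as `(a * b) ^ i • t`, the fixed points of `a` satisfy
`2 * i = 1` modulo the length of the orbit, which has at most one solution. -/
lemma eq_of_sameCycle_of_fixed (ha : Involutive a) (hb : Involutive b) (ht : b t = t)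
    (hx : (a * b).SameCycle t x) (hy : (a * b).SameCycle t y) (hax : a x = x) (hay : a y = y) :
    x = y := by
  obtain ⟨i, rfl⟩ := hx
  obtain ⟨j, rfl⟩ := hy
  have hzpow {k l : ℤ} : ((a * b) ^ k) t = ((a * b) ^ l) t ↔
      (MulAction.period (a * b) t : ℤ) ∣ k - l := by
    rw [← MulAction.zpow_smul_eq_iff_period_dvd, Equiv.Perm.smul_def, sub_eq_neg_add, zpow_add,
      Equiv.Perm.mul_apply, zpow_neg, Equiv.Perm.inv_eq_iff_eq]
  rw [apply_mul_zpow_apply ha hb ht, hzpow] at hax hay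
  rw [hzpow]
  have hij : i - j = (1 - j - j) * i - (1 - i - i) * j := by ring
  exact hij ▸ dvd_sub (hay.mul_right i) (hax.mul_right j)

end Alternating

/-- Exchange `f` for `g` along the alternating path that starts at `t`. -/
lemma exists_isMaximumMatching_fixed [Finite V] (hf : IsMaximumMatching G f)
    (hg : IsMaximumMatching G g) (huv : u ≠ v) (hfu : f u = u) (hfv : f v = v) (hgt : g t = t) :
    ∃ h, IsMaximumMatching G h ∧ h t = t ∧ (h u = u ∨ h v = v) := by
  classical
  let a := hf.involutive.toPerm
  let b := hg.involutive.toPerm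
  let s := {x | (a * b).SameCycle t x}
  have hfs : Set.MapsTo f s s := fun x hx ↦
    (sameCycle_apply hf.involutive hg.involutive hgt hx).1
  have hgs : Set.MapsTo g s s := fun x hx ↦
    (sameCycle_apply hf.involutive hg.involutive hgt hx).2
  have hts : t ∈ s := Equiv.Perm.SameCycle.refl _ _
  refine ⟨s.piecewise g f, hg.piecewise hf hgs hfs, by simpa [hts], ?_⟩
  by_contra! hne
  have hus : u ∈ s := by_contra fun h ↦ hne.1 (by simpa [h])
  have hvs : v ∈ s := by_contra fun h ↦ hne.2 (by simpa [h])
  exact huv (eq_of_sameCycle_of_fixed hf.involutive hg.involutive hgt hus hvs hfu hfv)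

lemma eq_of_reachable_of_fixed [Finite V] (hmiss : ∀ v, ∃ f, IsMaximumMatching G f ∧ f v = v)
    (huv : G.Reachable u v) (hf : IsMaximumMatching G f) (hfu : f u = u) (hfv : f v = v) :
    u = v := by
  rw [reachable_iff_reflTransGen] at huv
  induction huv generalizing f with
  | refl => rfl
  | @tail w v _ hwv ih =>
    by_contra hne
    obtain ⟨g, hg, hgw⟩ := hmiss w
    obtain ⟨h, hh, hhw, hhu | hhv⟩ := exists_isMaximumMatching_fixed hf hg hne hfu hfv hgw
    · exact hf.not_adj_of_fixed hfu hfv (ih hh hhu hhw ▸ hwv)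
    · exact hh.not_adj_of_fixed hhw hhv hwv

/-- **Gallai's lemma** on factor-critical graphs. -/
theorem deficiency_eq_one_of_connected [Finite V] (hconn : G.Connected)
    (hmiss : ∀ v, ∃ f, IsMaximumMatching G f ∧ f v = v) : deficiency G = 1 := by
  obtain ⟨u⟩ := hconn.nonempty
  obtain ⟨f, hf, hfu⟩ := hmiss u
  rw [← hf.ncard_fixedPoints, Set.ncard_eq_one]
  refine ⟨u, Set.eq_singleton_iff_unique_mem.2 ⟨hfu, fun v hfv ↦ ?_⟩⟩
  exact eq_of_reachable_of_fixed hmiss (hconn v u) hf hfv hfu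

end Matching

section Parity

variable {V : Type*} [Finite V] {G : SimpleGraph V} {f : V → V}

lemma two_mul_ncard_le_apply [LinearOrder V] (hf : Involutive f) :
    2 * {x | x ≤ f x}.ncard = Nat.card V + (fixedPoints f).ncard := by
  have himage : f '' {x | x ≤ f x} = {x | f x ≤ x} := by
    ext x
    rw [hf.image_eq_preimage_symm]
    simp [hf x]
  have hunion : {x | x ≤ f x} ∪ {x | f x ≤ x} = Set.univ :=
    Set.eq_univ_of_forall fun x ↦ le_total x (f x)
  have hinter : {x | x ≤ f x} ∩ {x | f x ≤ x} = fixedPoints f := by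
    ext x
    exact le_antisymm_iff.symm.trans eq_comm
  rw [← Set.ncard_univ, ← hunion, ← hinter, Set.ncard_union_add_ncard_inter, ← himage,
    Set.ncard_image_of_injective _ hf.injective, two_mul]

lemma even_card_add_ncard_fixedPoints (hf : Involutive f) :
    Even (Nat.card V + (fixedPoints f).ncard) := by
  obtain ⟨_, -⟩ := exists_wellFoundedLT V
  exact even_iff_exists_two_mul.2 ⟨_, (two_mul_ncard_le_apply hf).symm⟩

lemma even_card_add_deficiency (G : SimpleGraph V) : Even (Nat.card V + deficiency G) := by
  obtain ⟨f, hf⟩ := exists_isMaximumMatching G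
  exact hf.ncard_fixedPoints ▸ even_card_add_ncard_fixedPoints hf.involutive

lemma IsMatchingInvolution.colorable (hf : IsMatchingInvolution Gᶜ f) {m : ℕ}
    (hm : Nat.card V + (fixedPoints f).ncard ≤ 2 * m) : G.Colorable m := by
  obtain ⟨_, -⟩ := exists_wellFoundedLT V
  have := Fintype.ofFinite {x | x ≤ f x}
  let c : G.Coloring {x | x ≤ f x} := .mk
    (fun x ↦ ⟨min x (f x), by
      rcases le_total x (f x) with h | h <;> simp [h, hf.involutive x]⟩) <| by
      intro x y hxy hc
      have hfx : f x = y := by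
        have : min x (f x) = min y (f y) := congrArg Subtype.val hc
        have := hf.involutive x
        have := hf.involutive y
        grind [hxy.ne]
      subst hfx
      exact (hf.adj hxy.ne').2 hxy
  refine c.colorable.mono ?_
  rw [← Nat.card_eq_fintype_card, Nat.card_coe_set_eq]
  have := two_mul_ncard_le_apply hf.involutive
  omega

lemma colorable_of_card_add_deficiency_compl_le {m : ℕ}
    (hm : Nat.card V + deficiency Gᶜ ≤ 2 * m) : G.Colorable m := by
  obtain ⟨f, hf⟩ := exists_isMaximumMatching Gᶜ
  exact hf.toIsMatchingInvolution.colorable (hf.ncard_fixedPoints.symm ▸ hm)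

end Parity

section Bound

variable {V : Type u} {G : SimpleGraph V}

lemma exists_nonempty_compl_not_adj_of_not_preconnected (hG : ¬ G.Preconnected) :
    ∃ s : Set V, s.Nonempty ∧ sᶜ.Nonempty ∧ ∀ x ∈ s, ∀ y ∈ sᶜ, ¬ G.Adj x y := by
  simp only [Preconnected, not_forall] at hG
  obtain ⟨u, w, huw⟩ := hG
  exact ⟨{x | G.Reachable u x}, ⟨u, .rfl⟩, ⟨w, huw⟩,
    fun x hx y hy hxy ↦ hy (hx.trans hxy.reachable)⟩

variable [Finite V]

lemma deficiency_lt_deficiency_induce_compl_singleton {v : V}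
    (hv : ∀ f, IsMaximumMatching G f → f v ≠ v) :
    deficiency G < deficiency (G.induce {v}ᶜ) := by
  obtain ⟨f, hf⟩ := exists_isMaximumMatching (G.induce {v}ᶜ)
  obtain ⟨g, hg, hgv, hcard⟩ := hf.exists_extension
  rw [compl_compl, Set.ncard_singleton, hf.ncard_fixedPoints] at hcard
  have hne : (fixedPoints g).ncard ≠ deficiency G := fun h ↦ hv g ⟨hg, h⟩ (hgv v (by simp))
  have hle := hg.deficiency_le
  obtain ⟨k, hk⟩ := even_card_add_deficiency G
  obtain ⟨l, hl⟩ := even_card_add_deficiency (G.induce {v}ᶜ)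
  have hsplit := Set.ncard_add_ncard_compl {v}
  rw [Set.ncard_singleton, ← Nat.card_coe_set_eq] at hsplit
  omega

lemma card_add_three_mul_deficiency_le_of_connected (htri : G.CliqueFree 3) (hconn : G.Connected)
    (hmiss : ∀ v, ∃ f, IsMaximumMatching G f ∧ f v = v)
    (hcard : Nat.card V ≤ 16 + deficiency G) :
    Nat.card V + 3 * deficiency G ≤ 4 * G.indepNum := by
  obtain ⟨k, hk⟩ := even_card_add_deficiency G
  rw [deficiency_eq_one_of_connected hconn hmiss] at hcard hk ⊢
  have hq : (Nat.card V + 6) / 4 * ((Nat.card V + 6) / 4 + 1) ≤ 2 * Nat.card V := by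
    generalize Nat.card V = n at *
    interval_cases n <;> omega
  have := le_indepNum_of_cliqueFree_three htri hq
  omega

/-- The bounds for two complementary sets of vertices without edges between them add up, and
deleting a vertex covered by all maximum matchings raises the deficiency. When neither reduction
applies, Gallai's lemma leaves only the bound on `R(3, q)`. -/
theorem card_add_three_mul_deficiency_le (htri : G.CliqueFree 3)
    (hcard : Nat.card V ≤ 16 + deficiency G) :
    Nat.card V + 3 * deficiency G ≤ 4 * G.indepNum := by
  induction hn : Nat.card V using Nat.strong_induction_on generalizing V with
  | _ n ih =>
  subst hn
  have ih_induce (s : Set V) (hs : s.ncard < Nat.card V)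
      (hcard : s.ncard ≤ 16 + deficiency (G.induce s)) :
      s.ncard + 3 * deficiency (G.induce s) ≤ 4 * (G.induce s).indepNum :=
    ih _ hs (htri.comap ⟨(Embedding.induce s).toCopy⟩) hcard rfl
  by_cases hmiss : ∀ v, ∃ f, IsMaximumMatching G f ∧ f v = v
  · by_cases hconn : G.Preconnected
    · rcases isEmpty_or_nonempty V with hV | hV
      · have := deficiency_le_card G
        simp_all
      · exact card_add_three_mul_deficiency_le_of_connected htri ⟨hconn⟩ hmiss hcard
    · obtain ⟨s, hs, hs_compl, hadj⟩ := exists_nonempty_compl_not_adj_of_not_preconnected hconn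
      rw [← Set.ncard_pos] at hs hs_compl
      have hsplit := Set.ncard_add_ncard_compl s
      have hdef := deficiency_le_induce_add_induce_compl G s
      have hdef_s : deficiency (G.induce s) ≤ s.ncard := deficiency_le_card _
      have hdef_compl : deficiency (G.induce sᶜ) ≤ sᶜ.ncard := deficiency_le_card _
      have hind : (G.induce s).indepNum + (G.induce sᶜ).indepNum ≤ G.indepNum :=
        indepNum_induce_add_indepNum_induce_le disjoint_compl_right hadj
      have := ih_induce s (by omega) (by omega)
      have := ih_induce sᶜ (by omega) (by omega)
      omega
  · push Not at hmiss
    obtain ⟨v, hv⟩ := hmiss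
    have hdef := deficiency_lt_deficiency_induce_compl_singleton hv
    have hind := indepNum_induce_le (G := G) {v}ᶜ
    have hsplit := Set.ncard_add_ncard_compl {v}
    rw [Set.ncard_singleton] at hsplit
    have := ih_induce {v}ᶜ (by omega) (by omega)
    omega

end Bound

section LowerBound

variable {V : Type u} {G : SimpleGraph V}

lemma colorable_succ_of_isIndepSet {s : Set V} {m : ℕ} (hs : G.IsIndepSet s)
    (hcol : (G.induce sᶜ).Colorable m) : G.Colorable (m + 1) := by
  classical
  obtain ⟨c⟩ := hcol
  let d : G.Coloring (Option (Fin m)) := .mk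
    (fun x ↦ if hx : x ∈ s then none else some (c ⟨x, hx⟩)) <| by
      intro x y hxy
      by_cases hx : x ∈ s <;> by_cases hy : y ∈ s
      · exact (hs hx hy hxy.ne hxy).elim
      · simp [hx, hy]
      · simp [hx, hy]
      · simpa [hx, hy] using c.valid (v := ⟨x, hx⟩) (w := ⟨y, hy⟩) hxy
  simpa using d.colorable

variable [Finite V]

lemma colorable_of_cliqueFree_three_compl {d m : ℕ} (htri : Gᶜ.CliqueFree 3) (hd : d ≤ 4)
    (hcard : Nat.card V ≤ m + 2 * d) (hclique : G.cliqueNum + d ≤ m + 1) : G.Colorable m := by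
  refine colorable_of_card_add_deficiency_compl_le ?_
  by_contra! hlt
  obtain ⟨k, hk⟩ := even_card_add_deficiency Gᶜ
  have hbound := card_add_three_mul_deficiency_le htri (by omega)
  rw [indepNum_compl] at hbound
  omega

theorem colorable_of_card_le {d m : ℕ} (hd : d ≤ 4) (hcard : Nat.card V ≤ m + 2 * d)
    (hclique : G.cliqueNum + d ≤ m + 1) : G.Colorable m := by
  induction d generalizing V m with
  | zero =>
    have := Fintype.ofFinite V
    exact G.colorable_of_fintype.mono (by simpa using hcard)
  | succ d ih =>
    by_cases htri : Gᶜ.CliqueFree 3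
    · exact colorable_of_cliqueFree_three_compl htri hd hcard hclique
    · simp only [CliqueFree, not_forall, not_not, isNClique_compl] at htri
      obtain ⟨t, ht⟩ := htri
      have htcard : (t : Set V).ncard = 3 := by rw [Set.ncard_coe_finset, ht.card_eq]
      have hsplit := Set.ncard_add_ncard_compl (t : Set V)
      have hpos : 0 < Gᶜ.indepNum := by
        obtain ⟨v, -⟩ := Finset.card_pos.1 (ht.card_eq ▸ three_pos)
        have : Nonempty V := ⟨v⟩
        exact indepNum_pos
      rw [indepNum_compl] at hpos
      have hle := G.cliqueNum_induce_le (t : Set V)ᶜ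
      obtain ⟨m, rfl⟩ : ∃ k, m = k + 1 := Nat.exists_eq_succ_of_ne_zero (by omega)
      refine colorable_succ_of_isIndepSet ht.isIndepSet (ih (by omega) ?_ (by omega))
      rw [Nat.card_coe_set_eq]
      omega

theorem add_nine_le_card_of_not_colorable {r : ℕ} (hfree : G.CliqueFree (r - 2))
    (hcol : ¬ G.Colorable r) : r + 9 ≤ Nat.card V := by
  by_contra! hlt
  obtain ⟨s, hs⟩ := G.exists_isNClique_cliqueNum
  have hclique : G.cliqueNum < r - 2 := not_le.1 fun h ↦ hfree.mono h s hs
  exact hcol (colorable_of_card_le (d := 4) le_rfl (by omega) (by omega))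

end LowerBound

section Sum

variable {V W : Type*} {G : SimpleGraph V} {H : SimpleGraph W}

lemma indepNum_sum_le [Finite V] [Finite W] :
    (G ⊕g H).indepNum ≤ G.indepNum + H.indepNum := by
  obtain ⟨s, hs⟩ := (G ⊕g H).exists_isNIndepSet_indepNum
  have hleft : G.IsIndepSet s.toLeft := fun v hv w hw hvw hadj ↦
    hs.isIndepSet (Finset.mem_toLeft.1 hv) (Finset.mem_toLeft.1 hw) (Sum.inl_injective.ne hvw)
      (sum_adj_inl.2 hadj)
  have hright : H.IsIndepSet s.toRight := fun v hv w hw hvw hadj ↦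
    hs.isIndepSet (Finset.mem_toRight.1 hv) (Finset.mem_toRight.1 hw) (Sum.inr_injective.ne hvw)
      (sum_adj_inr.2 hadj)
  rw [← hs.card_eq, ← Finset.card_toLeft_add_card_toRight]
  exact add_le_add hleft.card_le_indepNum hright.card_le_indepNum

/-- The complement of a disjoint sum is a join, where the two sides use different colors. -/
lemma exists_colorable_of_colorable_compl_sum {n : ℕ} (hcol : (G ⊕g H)ᶜ.Colorable n) :
    ∃ a b, a + b ≤ n ∧ Gᶜ.Colorable a ∧ Hᶜ.Colorable b := by
  classical
  obtain ⟨c⟩ := hcol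
  let s := Set.range (c ∘ Sum.inl)
  let t := Set.range (c ∘ Sum.inr)
  have hst : Disjoint s t := by
    rw [Set.disjoint_left]
    rintro _ ⟨v, rfl⟩ ⟨w, hw⟩
    exact c.valid (v := .inl v) (w := .inr w) (by simp) hw.symm
  let cG : Gᶜ.Coloring s := .mk (Set.rangeFactorization (c ∘ Sum.inl)) fun {v w} hvw h ↦
    c.valid (v := .inl v) (w := .inl w) (by simpa using hvw) (congrArg Subtype.val h)
  let cH : Hᶜ.Coloring t := .mk (Set.rangeFactorization (c ∘ Sum.inr)) fun {v w} hvw h ↦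
    c.valid (v := .inr v) (w := .inr w) (by simpa using hvw) (congrArg Subtype.val h)
  refine ⟨_, _, ?_, cG.colorable, cH.colorable⟩
  rw [← Nat.card_eq_fintype_card, ← Nat.card_eq_fintype_card, Nat.card_coe_set_eq,
    Nat.card_coe_set_eq, ← Set.ncard_union_eq hst]
  exact (Set.ncard_le_card _).trans_eq (Nat.card_fin n)

lemma card_le_mul_indepNum_of_colorable [Finite V] {n : ℕ} (hcol : G.Colorable n) :
    Nat.card V ≤ n * G.indepNum := by
  classical
  have := Fintype.ofFinite V
  obtain ⟨c⟩ := hcol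
  have hclass (i : Fin n) : (Finset.univ.filter (c · = i)).card ≤ G.indepNum :=
    IsIndepSet.card_le_indepNum fun v hv w hw _ hvw ↦ c.valid hvw (by simp_all)
  have := Finset.card_le_mul_card_image_of_maps_to (f := c) (s := Finset.univ) (t := Finset.univ)
    (fun _ _ ↦ Finset.mem_univ _) _ fun i _ ↦ hclass i
  simpa [mul_comm] using this

end Sum

section IndependentSublists

variable {V : Type*}

/-- The sublists of a list of vertices that are independent in `G`. The recursion prunes as it
extends, so the kernel can evaluate it. -/
def independentSublists (G : SimpleGraph V) [DecidableRel G.Adj] : List V → List (List V)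
  | [] => [[]]
  | v :: l => (independentSublists G l).flatMap fun t ↦
      if ∀ w ∈ t, ¬ G.Adj v w then [t, v :: t] else [t]

variable {G : SimpleGraph V} [DecidableRel G.Adj]

lemma mem_independentSublists {l t : List V} (htl : t.Sublist l)
    (ht : t.Pairwise fun v w ↦ ¬ G.Adj v w) : t ∈ independentSublists G l := by
  induction htl with
  | slnil => exact List.mem_singleton_self _
  | @cons t l v _ ih =>
    refine List.mem_flatMap.2 ⟨t, ih ht, ?_⟩
    split <;> simp
  | @cons_cons t l v _ ih =>
    rw [List.pairwise_cons] at ht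
    exact List.mem_flatMap.2 ⟨t, ih ht.2, by simp [if_pos ht.1]⟩

lemma indepNum_le_of_forall_mem_independentSublists {l : List V} {k : ℕ} (hl : ∀ v, v ∈ l)
    (hk : ∀ t ∈ independentSublists G l, t.length ≤ k) : G.indepNum ≤ k := by
  classical
  obtain ⟨s, hs⟩ := G.exists_isNIndepSet_indepNum
  let t := l.dedup.filter (· ∈ s)
  have hnodup : t.Nodup := (List.nodup_dedup l).filter _
  have hts : t.toFinset = s := by
    ext v
    simp [t, hl v]
  rw [← hs.card_eq, ← hts, List.toFinset_card_of_nodup hnodup]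
  refine hk t (mem_independentSublists (List.filter_sublist.trans (List.dedup_sublist l)) ?_)
  exact hnodup.imp_of_mem fun hv hw hvw ↦
    hs.isIndepSet (hts ▸ List.mem_toFinset.2 hv) (hts ▸ List.mem_toFinset.2 hw) hvw

end IndependentSublists

section Ramsey

/-- The differences `j - i` modulo `4` for which `(p, i)` and `(q, j)` are adjacent in
`ramseyGraph`. -/
def ramseyConnection : Fin 4 → Fin 4 → Finset (Fin 4) :=
  ![![∅, {2}, {0, 3}, {0}],
    ![{2}, {1, 3}, {3}, {0}],
    ![{0, 1}, {1}, {2}, {3}],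
    ![{0}, {0}, {1}, {1, 3}]]

/-- The adjacency relation of `ramseyGraph`, with values in `Bool` to make it decidable. -/
def ramseyAdj : Option (Fin 4 × Fin 4) → Option (Fin 4 × Fin 4) → Bool
  | some (p, i), some (q, j) => j - i ∈ ramseyConnection p q
  | some (p, _), none | none, some (p, _) => p = 0
  | none, none => false

/-- A triangle-free graph on 17 vertices without independent sets of size 6, witnessing
`R(3, 6) > 17`. Its vertices form four orbits `(p, ·)` of length 4 and the fixed point `none` under
the symmetry `(p, i) ↦ (p, i + 1)`. -/
def ramseyGraph : SimpleGraph (Option (Fin 4 × Fin 4)) where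
  Adj v w := ramseyAdj v w
  symm := ⟨by decide⟩
  loopless := ⟨by decide⟩

instance : DecidableRel ramseyGraph.Adj :=
  fun v w ↦ inferInstanceAs (Decidable (ramseyAdj v w))

lemma ramseyGraph_cliqueFree_three : ramseyGraph.CliqueFree 3 := by
  intro t ht
  obtain ⟨u, v, w, huv, huw, hvw, -⟩ := is3Clique_iff.1 ht
  have hfree : ∀ u v, ramseyGraph.Adj u v → ∀ w, ramseyGraph.Adj u w → ¬ ramseyGraph.Adj v w := by
    decide +kernel
  exact hfree u v huv w huw hvw

lemma cliqueNum_ramseyGraph_le : ramseyGraph.cliqueNum ≤ 2 := by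
  obtain ⟨s, hs⟩ := ramseyGraph.exists_isNClique_cliqueNum
  exact not_lt.1 fun h ↦ ramseyGraph_cliqueFree_three.mono h s hs

lemma indepNum_ramseyGraph_le : ramseyGraph.indepNum ≤ 5 :=
  indepNum_le_of_forall_mem_independentSublists
    (l := none :: (List.finRange 4 ×ˢ List.finRange 4).map some) (by simp [Option.forall])
    (by decide +kernel)

lemma not_colorable_compl_ramseyGraph : ¬ ramseyGraphᶜ.Colorable 8 := by
  intro hcol
  have hcard := card_le_mul_indepNum_of_colorable hcol
  have hcard_eq : Nat.card (Option (Fin 4 × Fin 4)) = 17 := by simp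
  rw [indepNum_compl, hcard_eq] at hcard
  have := cliqueNum_ramseyGraph_le
  omega

end Ramsey

lemma exists_cliqueFree_not_colorable (k : ℕ) : ∃ G : SimpleGraph (Fin (k + 17)),
    G.CliqueFree (k + 6) ∧ ¬ G.Colorable (k + 8) := by
  let J := (ramseyGraph ⊕g (⊥ : SimpleGraph (Fin k)))ᶜ
  let e : Fin (k + 17) ≃ Option (Fin 4 × Fin 4) ⊕ Fin k :=
    (Fintype.equivFinOfCardEq (by simp [add_comm])).symm
  have hbot : (⊥ : SimpleGraph (Fin k)).indepNum ≤ k := by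
    obtain ⟨s, hs⟩ := (⊥ : SimpleGraph (Fin k)).exists_isNIndepSet_indepNum
    simpa [← hs.card_eq] using s.card_le_univ
  have hfree : J.CliqueFree (k + 6) := by
    intro s hs
    rw [isNClique_compl] at hs
    have hle := hs.isIndepSet.card_le_indepNum.trans indepNum_sum_le
    have hram := indepNum_ramseyGraph_le
    rw [hs.card_eq] at hle
    omega
  have hcol : ¬ J.Colorable (k + 8) := by
    intro hJ
    obtain ⟨a, b, hab, ha, hb⟩ := exists_colorable_of_colorable_compl_sum hJ
    rw [compl_bot] at hb
    have hkb : k ≤ b := by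
      simpa using IsClique.card_le_of_colorable (s := Finset.univ) (by simp) hb
    exact not_colorable_compl_ramseyGraph (ha.mono (by omega))
  let φ : J.comap e ≃g J := Iso.comap e J
  exact ⟨J.comap e, hfree.comap ⟨φ.toEmbedding.toCopy⟩, fun h ↦ hcol (h.of_hom φ.symm.toHom)⟩

lemma add_one_le_chromaticNumber_iff {V : Type*} {G : SimpleGraph V} {r : ℕ} :
    (r + 1 : ℕ∞) ≤ G.chromaticNumber ↔ ¬ G.Colorable r := by
  rw [← chromaticNumber_le_iff_colorable, not_le]
  exact Order.add_one_le_iff_of_not_isMax (by simp)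

end Folkman

theorem stmt_4 (r : ℕ) (hr : 8 ≤ r) :
    (∀ (V : Type) [Fintype V] (G : SimpleGraph V),
        G.CliqueFree (r - 2) → (r + 1 : ℕ∞) ≤ G.chromaticNumber →
        r + 9 ≤ Fintype.card V) ∧
    (∃ G : SimpleGraph (Fin (r + 9)),
        G.CliqueFree (r - 2) ∧ (r + 1 : ℕ∞) ≤ G.chromaticNumber) ∧
    folkman r (r - 2) = r + 9 := by
  have hlower (V : Type) [Fintype V] (G : SimpleGraph V) (hfree : G.CliqueFree (r - 2))
      (hchrom : (r + 1 : ℕ∞) ≤ G.chromaticNumber) : r + 9 ≤ Fintype.card V :=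
    Nat.card_eq_fintype_card (α := V) ▸ Folkman.add_nine_le_card_of_not_colorable hfree
      (Folkman.add_one_le_chromaticNumber_iff.1 hchrom)
  have hexists : ∃ G : SimpleGraph (Fin (r + 9)),
      G.CliqueFree (r - 2) ∧ (r + 1 : ℕ∞) ≤ G.chromaticNumber := by
    obtain ⟨k, rfl⟩ := Nat.exists_eq_add_of_le' hr
    obtain ⟨G, hfree, hcol⟩ := Folkman.exists_cliqueFree_not_colorable k
    exact ⟨G, hfree, Folkman.add_one_le_chromaticNumber_iff.2 hcol⟩
  refine ⟨hlower, hexists, le_antisymm (Nat.sInf_le hexists) (le_csInf ⟨_, hexists⟩ ?_)⟩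
  rintro n ⟨G, hfree, hchrom⟩
  simpa using hlower (Fin n) G hfree hchrom
end
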